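/- arXiv:2506.07420 — 5 statements merged into one kernel-verified Lean document; each statement's English description precedes it below -/
import Mathlib

section
/- Let p be a prime and let c ∈ ℤ_p^× with c ≠ 1 and c ≠ −1. For each integer n ≥ 1 set M_n := (1 − c^n)·(1 − p^{n−1})·(−B_n/n), an element of ℚ_p (the product of the p-adic integer 1 − c^n with the rational number (1 − p^{n−1})(−B_n/n)). Then there exists M_0 ∈ ℤ_p such that for every polynomial f(r) = ∑_{n=0}^N a_n r^n with rational coefficients satisfying f(x) ∈ ℤ_p for every x ∈ ℤ_p^×, the sum ∑_{n=0}^N a_n·M_n, computed in ℚ_p, lies in ℤ_p. In particular each M_n with n ≥ 1 lies in ℤ_p. -/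
open Filter Topology

namespace MazurAux

variable {p : ℕ} [hp : Fact p.Prime]

lemma faulhaber_tendsto (n : ℕ) :
    Tendsto (fun N : ℕ => (∑ k ∈ Finset.range (p ^ N), (k : ℚ_[p]) ^ n) / (p : ℚ_[p]) ^ N)
      atTop (𝓝 ((bernoulli n : ℚ) : ℚ_[p])) := by
  have hp0 : (p : ℚ_[p]) ≠ 0 := by exact_mod_cast hp.out.ne_zero
  have h0 : Tendsto (fun N : ℕ => (p : ℚ_[p]) ^ N) atTop (𝓝 0) :=
    tendsto_pow_atTop_nhds_zero_of_norm_lt_one Padic.norm_p_lt_one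
  have key : ∀ N : ℕ, (∑ k ∈ Finset.range (p ^ N), (k : ℚ_[p]) ^ n) / (p : ℚ_[p]) ^ N =
      ∑ i ∈ Finset.range (n + 1), ((bernoulli i * ((n + 1).choose i) / (n + 1) : ℚ) : ℚ_[p]) *
        ((p : ℚ_[p]) ^ N) ^ (n - i) := by
    intro N
    have h := congrArg (fun x : ℚ => (x : ℚ_[p])) (sum_range_pow (p ^ N) n)
    push_cast at h
    rw [h, Finset.sum_div]
    refine Finset.sum_congr rfl fun i hi => ?_
    have hi' : n + 1 - i = (n - i) + 1 := by
      have := Finset.mem_range.1 hi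
      omega
    rw [hi', pow_succ]
    push_cast
    have : (p : ℚ_[p]) ^ N ≠ 0 := pow_ne_zero _ hp0
    field_simp
  have hlim : Tendsto (fun N : ℕ => ∑ i ∈ Finset.range (n + 1),
      ((bernoulli i * ((n + 1).choose i) / (n + 1) : ℚ) : ℚ_[p]) * ((p : ℚ_[p]) ^ N) ^ (n - i))
      atTop (𝓝 (∑ i ∈ Finset.range (n + 1),
      ((bernoulli i * ((n + 1).choose i) / (n + 1) : ℚ) : ℚ_[p]) * (0 : ℚ_[p]) ^ (n - i))) :=
    tendsto_finsetSum _ fun i _ => (h0.pow (n - i)).const_mul _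
  have hval : (∑ i ∈ Finset.range (n + 1),
      ((bernoulli i * ((n + 1).choose i) / (n + 1) : ℚ) : ℚ_[p]) * (0 : ℚ_[p]) ^ (n - i))
      = ((bernoulli n : ℚ) : ℚ_[p]) := by
    rw [Finset.sum_range_succ, Finset.sum_eq_zero]
    · have : (n + 1 : ℚ) ≠ 0 := by positivity
      simp only [Nat.sub_self, pow_zero, mul_one, zero_add]
      congr 1
      rw [Nat.choose_succ_self_right]
      push_cast
      field_simp
    · intro i hi
      have := Finset.mem_range.1 hi
      rw [zero_pow (by omega), mul_zero]
  rw [← hval]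
  exact hlim.congr fun N => (key N).symm

/-- residues prime to `p` -/
def R (p N : ℕ) : Finset ℕ := (Finset.range (p ^ N)).filter (fun a => ¬ p ∣ a)

lemma sum_R (n M : ℕ) : ∑ a ∈ R p (M + 1), (a : ℚ_[p]) ^ n =
    ∑ a ∈ Finset.range (p ^ (M + 1)), (a : ℚ_[p]) ^ n
      - (p : ℚ_[p]) ^ n * ∑ a ∈ Finset.range (p ^ M), (a : ℚ_[p]) ^ n := by
  have hpos := hp.out.pos
  rw [eq_sub_iff_add_eq,
    ← Finset.sum_filter_add_sum_filter_not (Finset.range (p ^ (M + 1))) (fun a => ¬ p ∣ a)]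
  congr 1
  have : (Finset.range (p ^ (M + 1))).filter (fun a => ¬ ¬ p ∣ a)
      = (Finset.range (p ^ M)).image (fun b => p * b) := by
    ext a
    simp only [Finset.mem_filter, Finset.mem_range, not_not, Finset.mem_image]
    constructor
    · rintro ⟨h, b, rfl⟩
      refine ⟨b, ?_, rfl⟩
      rw [pow_succ'] at h
      exact Nat.lt_of_mul_lt_mul_left h
    · rintro ⟨b, hb, rfl⟩
      refine ⟨?_, dvd_mul_right _ _⟩
      rw [pow_succ']
      exact Nat.mul_lt_mul_of_pos_left hb hpos
  rw [this, Finset.sum_image (fun a _ b _ h => Nat.eq_of_mul_eq_mul_left hpos h), Finset.mul_sum]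
  refine Finset.sum_congr rfl fun b _ => ?_
  push_cast
  ring

lemma sum_R_tendsto (n : ℕ) (hn : 1 ≤ n) :
    Tendsto (fun M : ℕ => (∑ a ∈ R p (M + 1), (a : ℚ_[p]) ^ n) / (p : ℚ_[p]) ^ (M + 1))
      atTop (𝓝 ((1 - (p : ℚ_[p]) ^ (n - 1)) * ((bernoulli n : ℚ) : ℚ_[p]))) := by
  have hp0 : (p : ℚ_[p]) ≠ 0 := by exact_mod_cast hp.out.ne_zero
  have h1 := faulhaber_tendsto (p := p) n
  have h2 := (h1.comp (tendsto_add_atTop_nat 1)).sub (h1.const_mul ((p : ℚ_[p]) ^ (n - 1)))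
  rw [sub_mul, one_mul]
  refine h2.congr fun M => ?_
  obtain ⟨m, rfl⟩ : ∃ m, n = m + 1 := ⟨n - 1, by omega⟩
  simp only [Function.comp, sum_R, Nat.add_sub_cancel]
  field_simp
  ring

lemma exists_q (x : ℤ_[p]) (N : ℕ) : ∃ q : ℤ_[p], x - (x.appr N : ℤ_[p]) = (p : ℤ_[p]) ^ N * q :=
  Ideal.mem_span_singleton.1 (PadicInt.appr_spec N x)

/-- the quotient of `x` by `p ^ N` -/
noncomputable def q (x : ℤ_[p]) (N : ℕ) : ℤ_[p] := (exists_q x N).choose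

lemma q_spec (x : ℤ_[p]) (N : ℕ) : x - (x.appr N : ℤ_[p]) = (p : ℤ_[p]) ^ N * q x N :=
  (exists_q x N).choose_spec

lemma norm_cast_R {N a : ℕ} (ha : a ∈ R p N) : ‖(a : ℤ_[p])‖ = 1 :=
  PadicInt.norm_natCast_eq_one_iff.2
    ((Nat.Prime.coprime_iff_not_dvd hp.out).2 (Finset.mem_filter.1 ha).2)

lemma image_R (c : ℤ_[p]ˣ) (M : ℕ) :
    (R p (M + 1)).image (fun a : ℕ => ((c : ℤ_[p]) * (a : ℤ_[p])).appr (M + 1)) = R p (M + 1) ∧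
    Set.InjOn (fun a : ℕ => ((c : ℤ_[p]) * (a : ℤ_[p])).appr (M + 1)) (R p (M + 1)) := by
  have hinj : Set.InjOn (fun a : ℕ => ((c : ℤ_[p]) * (a : ℤ_[p])).appr (M + 1)) (R p (M + 1)) := by
    intro a ha b hb hab
    have ha' := Finset.mem_range.1 (Finset.mem_filter.1 ha).1
    have hb' := Finset.mem_range.1 (Finset.mem_filter.1 hb).1
    have h1 := q_spec ((c : ℤ_[p]) * (a : ℤ_[p])) (M + 1)
    have h2 := q_spec ((c : ℤ_[p]) * (b : ℤ_[p])) (M + 1)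
    simp only at hab
    rw [hab] at h1
    have h3 : (p : ℤ_[p]) ^ (M + 1) ∣ (((a : ℤ) - (b : ℤ) : ℤ) : ℤ_[p]) := by
      have : (p : ℤ_[p]) ^ (M + 1) ∣ (c : ℤ_[p]) * (((a : ℤ) - (b : ℤ) : ℤ) : ℤ_[p]) := by
        refine ⟨q ((c : ℤ_[p]) * (a : ℤ_[p])) (M + 1) - q ((c : ℤ_[p]) * (b : ℤ_[p])) (M + 1), ?_⟩
        push_cast
        linear_combination h1 - h2
      exact (Units.dvd_mul_left).1 this
    have h4 : ((p : ℤ) ^ (M + 1)) ∣ (a : ℤ) - b := by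
      rw [← PadicInt.norm_int_le_pow_iff_dvd (p := p), PadicInt.norm_le_pow_iff_mem_span_pow]
      exact Ideal.mem_span_singleton.2 h3
    have h5 : (a : ℤ) - b = 0 := by
      apply Int.eq_zero_of_abs_lt_dvd h4
      have e1 : (a : ℤ) < (p : ℤ) ^ (M + 1) := by exact_mod_cast ha'
      have e2 : (b : ℤ) < (p : ℤ) ^ (M + 1) := by exact_mod_cast hb'
      rw [abs_lt]
      constructor <;> linarith [Int.natCast_nonneg a, Int.natCast_nonneg b]
    omega
  refine ⟨?_, hinj⟩
  apply Finset.eq_of_subset_of_card_le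
  · intro b hb
    obtain ⟨a, ha, rfl⟩ := Finset.mem_image.1 hb
    refine Finset.mem_filter.2 ⟨Finset.mem_range.2 (PadicInt.appr_lt _ _), ?_⟩
    rintro ⟨k, hk⟩
    have h1 := q_spec ((c : ℤ_[p]) * (a : ℤ_[p])) (M + 1)
    rw [hk] at h1
    have h2 : (c : ℤ_[p]) * (a : ℤ_[p]) = p * ((k : ℤ_[p]) + (p : ℤ_[p]) ^ M * q ((c : ℤ_[p]) * (a : ℤ_[p])) (M + 1)) := by
      push_cast at h1
      linear_combination h1
    have h3 := congrArg norm h2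
    rw [norm_mul, norm_mul, norm_cast_R ha, PadicInt.norm_units, one_mul] at h3
    have h4 : ‖(p : ℤ_[p])‖ < 1 := by
      rw [PadicInt.norm_def, PadicInt.coe_natCast]
      exact Padic.norm_p_lt_one
    have h5 := PadicInt.norm_le_one ((k : ℤ_[p]) + (p : ℤ_[p]) ^ M * q ((c : ℤ_[p]) * (a : ℤ_[p])) (M + 1))
    nlinarith [norm_nonneg (p : ℤ_[p])]
  · rw [Finset.card_image_of_injOn hinj]

lemma congruence (c : ℤ_[p]ˣ) (M n : ℕ) : ∃ E : ℤ_[p],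
    ∑ a ∈ R p (M + 1), (a : ℤ_[p]) ^ n = (c : ℤ_[p]) ^ n * ∑ a ∈ R p (M + 1), (a : ℤ_[p]) ^ n
      - (n : ℤ_[p]) * (p : ℤ_[p]) ^ (M + 1) *
        ∑ a ∈ R p (M + 1), ((c : ℤ_[p]) * (a : ℤ_[p])) ^ (n - 1) * q ((c : ℤ_[p]) * (a : ℤ_[p])) (M + 1)
      + ((p : ℤ_[p]) ^ (M + 1)) ^ 2 * E := by
  obtain ⟨him, hinj⟩ := image_R c M
  have h : ∀ a : ℕ, ∃ k : ℤ_[p], ((((c : ℤ_[p]) * (a : ℤ_[p])).appr (M + 1) : ℕ) : ℤ_[p]) ^ n =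
      (c : ℤ_[p]) ^ n * (a : ℤ_[p]) ^ n
      - (n : ℤ_[p]) * (p : ℤ_[p]) ^ (M + 1) *
        (((c : ℤ_[p]) * (a : ℤ_[p])) ^ (n - 1) * q ((c : ℤ_[p]) * (a : ℤ_[p])) (M + 1))
      + ((p : ℤ_[p]) ^ (M + 1)) ^ 2 * k := by
    intro a
    obtain ⟨k, hk⟩ := Polynomial.powAddExpansion ((c : ℤ_[p]) * (a : ℤ_[p]))
      (-((p : ℤ_[p]) ^ (M + 1) * q ((c : ℤ_[p]) * (a : ℤ_[p])) (M + 1))) n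
    refine ⟨k * q ((c : ℤ_[p]) * (a : ℤ_[p])) (M + 1) ^ 2, ?_⟩
    have h1 := q_spec ((c : ℤ_[p]) * (a : ℤ_[p])) (M + 1)
    have h2 : ((((c : ℤ_[p]) * (a : ℤ_[p])).appr (M + 1) : ℕ) : ℤ_[p]) =
      (c : ℤ_[p]) * (a : ℤ_[p]) + -((p : ℤ_[p]) ^ (M + 1) * q ((c : ℤ_[p]) * (a : ℤ_[p])) (M + 1)) := by
      linear_combination -h1
    rw [h2, hk, mul_pow (c : ℤ_[p]) (a : ℤ_[p]) n]
    ring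
  choose k hk using h
  refine ⟨∑ a ∈ R p (M + 1), k a, ?_⟩
  conv_lhs => rw [← him]
  rw [Finset.sum_image hinj, Finset.sum_congr rfl fun a _ => hk a, Finset.sum_add_distrib,
    Finset.sum_sub_distrib, Finset.mul_sum, Finset.mul_sum, Finset.mul_sum]

/-- Riemann sums for the moments -/
noncomputable def S (c : ℤ_[p]ˣ) (n M : ℕ) : ℚ_[p] :=
  ∑ a ∈ R p (M + 1), (((c : ℤ_[p]) * (a : ℤ_[p]) : ℤ_[p]) : ℚ_[p]) ^ n *
    ((((c : ℤ_[p]) * (a : ℤ_[p]) : ℤ_[p]) : ℚ_[p])⁻¹ * (q ((c : ℤ_[p]) * (a : ℤ_[p])) (M + 1) : ℚ_[p]))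

lemma norm_ca (c : ℤ_[p]ˣ) {N a : ℕ} (ha : a ∈ R p N) :
    ‖(((c : ℤ_[p]) * (a : ℤ_[p]) : ℤ_[p]) : ℚ_[p])‖ = 1 := by
  rw [← PadicInt.norm_def, norm_mul, norm_cast_R ha, PadicInt.norm_units, one_mul]

lemma S_tendsto (c : ℤ_[p]ˣ) (n : ℕ) (hn : 1 ≤ n) :
    Tendsto (S c n) atTop (𝓝 (((1 - (c : ℤ_[p]) ^ n : ℤ_[p]) : ℚ_[p]) *
          ((((1 - (p : ℚ) ^ (n - 1)) * (-(bernoulli n) / (n : ℚ))) : ℚ) : ℚ_[p]))) := by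
  have hp0 : (p : ℚ_[p]) ≠ 0 := by exact_mod_cast hp.out.ne_zero
  have hn0 : (n : ℚ_[p]) ≠ 0 := by exact_mod_cast (by omega : n ≠ 0)
  choose E hE using fun M => congruence c M n
  have hS : ∀ M, S c n M = ((∑ a ∈ R p (M + 1), ((c : ℤ_[p]) * (a : ℤ_[p])) ^ (n - 1) *
      q ((c : ℤ_[p]) * (a : ℤ_[p])) (M + 1) : ℤ_[p]) : ℚ_[p]) := by
    intro M
    rw [S, PadicInt.coe_sum]
    refine Finset.sum_congr rfl fun a ha => ?_
    have h0 : (((c : ℤ_[p]) * (a : ℤ_[p]) : ℤ_[p]) : ℚ_[p]) ≠ 0 := by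
      rw [← norm_ne_zero_iff, norm_ca c ha]
      exact one_ne_zero
    obtain ⟨m, rfl⟩ : ∃ m, n = m + 1 := ⟨n - 1, by omega⟩
    rw [Nat.add_sub_cancel, PadicInt.coe_mul (_ ^ _), PadicInt.coe_pow, pow_succ]
    field_simp
  have hE0 : Tendsto (fun M => (p : ℚ_[p]) ^ (M + 1) * (E M : ℚ_[p])) atTop (𝓝 0) := by
    have h0 : Tendsto (fun N : ℕ => ‖(p : ℚ_[p]) ^ (N + 1)‖) atTop (𝓝 0) := by
      have := (tendsto_pow_atTop_nhds_zero_of_norm_lt_one (Padic.norm_p_lt_one (p := p))).norm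
      rw [norm_zero] at this
      exact this.comp (tendsto_add_atTop_nat 1)
    refine squeeze_zero_norm (fun M => ?_) h0
    rw [norm_mul]
    exact mul_le_of_le_one_right (norm_nonneg _) (E M).2
  have h2 := ((sum_R_tendsto (p := p) n hn).const_mul
    (-(1 - (c : ℚ_[p]) ^ n) / n)).add (hE0.const_mul ((n : ℚ_[p])⁻¹))
  have hv : ((1 - (c : ℤ_[p]) ^ n : ℤ_[p]) : ℚ_[p]) *
          ((((1 - (p : ℚ) ^ (n - 1)) * (-(bernoulli n) / (n : ℚ))) : ℚ) : ℚ_[p]) =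
      -(1 - (c : ℚ_[p]) ^ n) / n * ((1 - (p : ℚ_[p]) ^ (n - 1)) * ((bernoulli n : ℚ) : ℚ_[p]))
      + (n : ℚ_[p])⁻¹ * 0 := by
    push_cast
    ring
  rw [hv]
  refine h2.congr fun M => ?_
  have h3 := congrArg (fun x : ℤ_[p] => (x : ℚ_[p])) (hE M)
  simp only [PadicInt.coe_add, PadicInt.coe_sub, PadicInt.coe_mul ((n : ℤ_[p]) * _),
    ← hS M] at h3
  push_cast [PadicInt.coe_sum] at h3
  have hpM : (p : ℚ_[p]) ^ (M + 1) ≠ 0 := pow_ne_zero _ hp0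
  field_simp
  linear_combination -h3

lemma poly_bound (c : ℤ_[p]ˣ) (f : Polynomial ℚ)
    (hf : ∀ x : ℤ_[p]ˣ, ‖Polynomial.aeval ((x : ℤ_[p]) : ℚ_[p]) f‖ ≤ 1) (M : ℕ) :
    ‖∑ n ∈ f.support, ((f.coeff n : ℚ) : ℚ_[p]) * S c n M‖ ≤ 1 := by
  have : ∑ n ∈ f.support, ((f.coeff n : ℚ) : ℚ_[p]) * S c n M =
      ∑ a ∈ R p (M + 1), Polynomial.aeval (((c : ℤ_[p]) * (a : ℤ_[p]) : ℤ_[p]) : ℚ_[p]) f *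
    ((((c : ℤ_[p]) * (a : ℤ_[p]) : ℤ_[p]) : ℚ_[p])⁻¹ * (q ((c : ℤ_[p]) * (a : ℤ_[p])) (M + 1) : ℚ_[p])) := by
    simp only [S, Finset.mul_sum]
    rw [Finset.sum_comm]
    refine Finset.sum_congr rfl fun a _ => ?_
    rw [Polynomial.aeval_def, Polynomial.eval₂_eq_sum, Polynomial.sum, Finset.sum_mul]
    refine Finset.sum_congr rfl fun n _ => ?_
    rw [eq_ratCast, mul_assoc]
  rw [this]
  refine IsUltrametricDist.norm_sum_le_of_forall_le_of_nonneg zero_le_one fun a ha => ?_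
  have hu : IsUnit ((c : ℤ_[p]) * (a : ℤ_[p])) := by
    rw [PadicInt.isUnit_iff, PadicInt.norm_def]
    exact norm_ca c ha
  obtain ⟨u, hu⟩ := hu
  have h1 := hf u
  rw [hu] at h1
  rw [norm_mul, norm_mul, norm_inv, norm_ca c ha, inv_one, one_mul]
  exact mul_le_one₀ h1 (norm_nonneg _) (q ((c : ℤ_[p]) * (a : ℤ_[p])) (M + 1)).2

lemma S_norm (c : ℤ_[p]ˣ) (n M : ℕ) : ‖S c n M‖ ≤ 1 := by
  rw [S]
  refine IsUltrametricDist.norm_sum_le_of_forall_le_of_nonneg zero_le_one fun a ha => ?_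
  rw [norm_mul, norm_mul, norm_inv, norm_pow, norm_ca c ha, inv_one, one_pow, one_mul, one_mul]
  exact (q ((c : ℤ_[p]) * (a : ℤ_[p])) (M + 1)).2

end MazurAux


/-- the Mazur measure.  For a prime `p` and `c ∈ ℤ_p^×` with `c ≠ ±1`, the
sequence with `n`-th term `(1 − cⁿ)·(1 − p^{n−1})·(−Bₙ/n)` (for `n ≥ 1`) extends by some
`0`-th term `M 0 ∈ ℤ_p` to a sequence `(M n)` of `p`-adic numbers such that for every
rational polynomial `f = ∑ aₙ rⁿ` with `f(ℤ_p^×) ⊆ ℤ_p`, the sum `∑ aₙ · M n` lies in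
`ℤ_p`; in particular each `M n` with `n ≥ 1` lies in `ℤ_p`. -/
theorem mazur_measure_moments (p : ℕ) [Fact p.Prime] (c : ℤ_[p]ˣ)
    (hc1 : (c : ℤ_[p]) ≠ 1) (hc2 : (c : ℤ_[p]) ≠ -1) :
    ∃ M : ℕ → ℚ_[p], ‖M 0‖ ≤ 1 ∧
      (∀ n : ℕ, 1 ≤ n →
        M n = ((1 - (c : ℤ_[p]) ^ n : ℤ_[p]) : ℚ_[p]) *
          ((((1 - (p : ℚ) ^ (n - 1)) * (-(bernoulli n) / (n : ℚ))) : ℚ) : ℚ_[p])) ∧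
      (∀ f : Polynomial ℚ,
        (∀ x : ℤ_[p]ˣ, ‖Polynomial.aeval ((x : ℤ_[p]) : ℚ_[p]) f‖ ≤ 1) →
        ‖∑ n ∈ f.support, ((f.coeff n : ℚ) : ℚ_[p]) * M n‖ ≤ 1) ∧
      (∀ n : ℕ, 1 ≤ n → ‖M n‖ ≤ 1) := by
  have hle : ((hyperfilter ℕ : Ultrafilter ℕ) : Filter ℕ) ≤ atTop := by
    rw [← Nat.cofinite_eq_atTop]
    exact hyperfilter_le_cofinite
  obtain ⟨m0, -, hm0'⟩ := (isCompact_closedBall (0 : ℚ_[p]) 1).ultrafilter_le_nhds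
    ((hyperfilter ℕ).map (MazurAux.S c 0)) (by
      rw [Ultrafilter.coe_map, le_principal_iff, mem_map]
      refine Filter.univ_mem' fun M => ?_
      simpa using MazurAux.S_norm c 0 M)
  have hm0 : Tendsto (MazurAux.S c 0) (hyperfilter ℕ : Ultrafilter ℕ) (𝓝 m0) := hm0'
  let M : ℕ → ℚ_[p] := fun n => if n = 0 then m0 else
    ((1 - (c : ℤ_[p]) ^ n : ℤ_[p]) : ℚ_[p]) *
          ((((1 - (p : ℚ) ^ (n - 1)) * (-(bernoulli n) / (n : ℚ))) : ℚ) : ℚ_[p])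
  have hM : ∀ n, Tendsto (MazurAux.S c n) (hyperfilter ℕ : Ultrafilter ℕ) (𝓝 (M n)) := by
    intro n
    by_cases hn : n = 0
    · subst hn
      simpa [M] using hm0
    · simp only [M, if_neg hn]
      exact (MazurAux.S_tendsto c n (by omega)).mono_left hle
  have hb : ∀ n, ‖M n‖ ≤ 1 := fun n =>
    le_of_tendsto (hM n).norm (Eventually.of_forall fun k => MazurAux.S_norm c n k)
  refine ⟨M, hb 0, fun n hn => if_neg (by omega), fun f hf => ?_, fun n _ => hb n⟩
  have ht : Tendsto (fun k => ∑ n ∈ f.support, ((f.coeff n : ℚ) : ℚ_[p]) * MazurAux.S c n k)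
      (hyperfilter ℕ : Ultrafilter ℕ)
      (𝓝 (∑ n ∈ f.support, ((f.coeff n : ℚ) : ℚ_[p]) * M n)) :=
    tendsto_finsetSum _ fun n _ => (hM n).const_mul _
  exact le_of_tendsto ht.norm (Eventually.of_forall fun k => MazurAux.poly_bound c f hf k)
end

section
/- Let p be an odd prime and let c ∈ ℤ_p^× with c ≠ 1 and c ≠ −1. If m, n ≥ 1 and i ≥ 0 are integers with m ≡ n modulo (p−1)p^i, then (1 − c^m)(1 − p^{m−1})·B_m/m − (1 − c^n)(1 − p^{n−1})·B_n/n lies in p^{i+1}·ℤ_p. -/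
open Filter Topology

namespace RegKummer

variable {p : ℕ} [hp : Fact p.Prime]

/-- normalised power sums -/
lemma tendsto_S (k : ℕ) :
    Tendsto (fun N : ℕ => (∑ a ∈ Finset.range (p ^ N), (a : ℚ_[p]) ^ k) / (p : ℚ_[p]) ^ N) atTop
      (𝓝 ((bernoulli k : ℚ) : ℚ_[p])) := by
  have hp0 : (p : ℚ_[p]) ≠ 0 := by exact_mod_cast hp.out.ne_zero
  have h1 : ∀ N : ℕ, (∑ a ∈ Finset.range (p ^ N), (a : ℚ_[p]) ^ k) / (p : ℚ_[p]) ^ N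
      = ∑ j ∈ Finset.range (k + 1), ((bernoulli j : ℚ) : ℚ_[p]) * ((k + 1).choose j : ℚ_[p]) *
          ((p : ℚ_[p]) ^ N) ^ (k - j) / ((k : ℚ_[p]) + 1) := by
    intro N
    have := congrArg (fun q : ℚ => (q : ℚ_[p])) (sum_range_pow (p ^ N) k)
    push_cast at this
    rw [this, Finset.sum_div]
    refine Finset.sum_congr rfl fun j hj => ?_
    have hj' : k + 1 - j = (k - j) + 1 := by
      have := Finset.mem_range.1 hj
      omega
    rw [hj', pow_succ]
    have : ((p : ℚ_[p]) ^ N) ≠ 0 := pow_ne_zero _ hp0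
    field_simp
  simp_rw [h1]
  have hpN : Tendsto (fun N : ℕ => (p : ℚ_[p]) ^ N) atTop (𝓝 0) :=
    tendsto_pow_atTop_nhds_zero_of_norm_lt_one Padic.norm_p_lt_one
  have hc : Continuous (fun M : ℚ_[p] => ∑ j ∈ Finset.range (k + 1),
      ((bernoulli j : ℚ) : ℚ_[p]) * ((k + 1).choose j : ℚ_[p]) *
          M ^ (k - j) / ((k : ℚ_[p]) + 1)) := by
    fun_prop
  have := (hc.tendsto 0).comp hpN
  refine (congrArg (fun z => Tendsto _ atTop (𝓝 z)) ?_).mp this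
  rw [Finset.sum_range_succ, Finset.sum_eq_zero]
  · have : (k : ℚ_[p]) + 1 ≠ 0 := by exact_mod_cast k.succ_ne_zero
    simp [this]
  · intro j hj
    have := Finset.mem_range.1 hj
    rw [zero_pow (by omega)]
    simp

lemma sum_units (N k : ℕ) :
    (∑ u : (ZMod (p ^ (N + 1)))ˣ, ((u : ZMod (p ^ (N + 1))).val : ℚ_[p]) ^ k) =
      (∑ a ∈ Finset.range (p ^ (N + 1)), (a : ℚ_[p]) ^ k) -
        (p : ℚ_[p]) ^ k * ∑ a ∈ Finset.range (p ^ N), (a : ℚ_[p]) ^ k := by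
  have h1 : (∑ u : (ZMod (p ^ (N + 1)))ˣ, ((u : ZMod (p ^ (N + 1))).val : ℚ_[p]) ^ k) =
      ∑ a ∈ (Finset.range (p ^ (N + 1))).filter (fun a => ¬ p ∣ a), (a : ℚ_[p]) ^ k := by
    refine Finset.sum_bij (fun u _ => (u : ZMod (p ^ (N + 1))).val) ?_ ?_ ?_ ?_
    · intro u _
      have h := ZMod.val_coe_unit_coprime u
      rw [Nat.coprime_pow_right_iff (by omega), Nat.coprime_comm, hp.out.coprime_iff_not_dvd] at h
      simp [h, ZMod.val_lt]
    · intro u _ v _ h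
      exact Units.ext (ZMod.val_injective _ h)
    · intro a ha
      simp only [Finset.mem_filter, Finset.mem_range] at ha
      have hcop : a.Coprime (p ^ (N + 1)) := by
        rw [Nat.coprime_pow_right_iff (by omega), Nat.coprime_comm, hp.out.coprime_iff_not_dvd]
        exact ha.2
      refine ⟨ZMod.unitOfCoprime a hcop, Finset.mem_univ _, ?_⟩
      simp [ZMod.val_natCast, Nat.mod_eq_of_lt ha.1]
    · intro u _
      rfl
  have h2 : (p : ℚ_[p]) ^ k * ∑ a ∈ Finset.range (p ^ N), (a : ℚ_[p]) ^ k =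
      ∑ a ∈ (Finset.range (p ^ (N + 1))).filter (fun a => p ∣ a), (a : ℚ_[p]) ^ k := by
    rw [Finset.mul_sum]
    refine Finset.sum_bij (fun a _ => p * a) ?_ ?_ ?_ ?_
    · intro a ha
      simp only [Finset.mem_filter, Finset.mem_range] at ha ⊢
      refine ⟨?_, dvd_mul_right _ _⟩
      rw [pow_succ']
      exact Nat.mul_lt_mul_of_pos_left ha hp.out.pos
    · intro a _ b _ h
      exact Nat.eq_of_mul_eq_mul_left hp.out.pos h
    · rintro b hb
      simp only [Finset.mem_filter, Finset.mem_range] at hb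
      obtain ⟨hb, a, rfl⟩ := hb
      refine ⟨a, ?_, rfl⟩
      rw [pow_succ'] at hb
      exact Finset.mem_range.2 (lt_of_mul_lt_mul_left hb (Nat.zero_le _))
    · intro a _
      push_cast
      rw [mul_pow]
  rw [h1, h2, ← Finset.sum_filter_add_sum_filter_not (Finset.range (p ^ (N + 1))) (fun a => p ∣ a)]
  ring

lemma tendsto_F (k : ℕ) (hk : 1 ≤ k) :
    Tendsto (fun N : ℕ => (∑ u : (ZMod (p ^ (N + 1)))ˣ,
      ((u : ZMod (p ^ (N + 1))).val : ℚ_[p]) ^ k) / (p : ℚ_[p]) ^ (N + 1)) atTop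
      (𝓝 ((1 - (p : ℚ_[p]) ^ (k - 1)) * ((bernoulli k : ℚ) : ℚ_[p]))) := by
  have hp0 : (p : ℚ_[p]) ≠ 0 := by exact_mod_cast hp.out.ne_zero
  have h1 := (tendsto_add_atTop_iff_nat 1).2 (tendsto_S (p := p) k)
  have h2 := h1.sub ((tendsto_S (p := p) k).const_mul ((p : ℚ_[p]) ^ (k - 1)))
  rw [sub_mul, one_mul]
  refine h2.congr fun N => ?_
  rw [sum_units N k]
  obtain ⟨l, rfl⟩ : ∃ l, k = l + 1 := ⟨k - 1, by omega⟩
  simp only [Nat.add_sub_cancel]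
  field_simp
  ring

/-- reduction of `c` -/
noncomputable def red (c : ℤ_[p]ˣ) (N : ℕ) : (ZMod (p ^ N))ˣ :=
  Units.map (PadicInt.toZModPow (p := p) N).toMonoidHom c

lemma exists_t (c : ℤ_[p]ˣ) (N : ℕ) (u : (ZMod (p ^ N))ˣ) :
    ∃ t : ℤ_[p], (((red c N * u : (ZMod (p ^ N))ˣ) : ZMod (p ^ N)).val : ℤ_[p]) =
      (c : ℤ_[p]) * ((u : ZMod (p ^ N)).val : ℤ_[p]) + t * (p : ℤ_[p]) ^ N := by
  have : NeZero (p ^ N) := ⟨pow_ne_zero _ hp.out.ne_zero⟩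
  have h : (((red c N * u : (ZMod (p ^ N))ˣ) : ZMod (p ^ N)).val : ℤ_[p]) -
      (c : ℤ_[p]) * ((u : ZMod (p ^ N)).val : ℤ_[p]) ∈ RingHom.ker (PadicInt.toZModPow (p := p) N) := by
    rw [RingHom.mem_ker, map_sub, map_mul, map_natCast, map_natCast, ZMod.natCast_zmod_val,
      ZMod.natCast_zmod_val]
    simp [red]
  rw [PadicInt.ker_toZModPow, Ideal.mem_span_singleton'] at h
  obtain ⟨t, ht⟩ := h
  exact ⟨t, by rw [ht]; ring⟩

noncomputable def tt (c : ℤ_[p]ˣ) (N : ℕ) (u : (ZMod (p ^ N))ˣ) : ℤ_[p] := (exists_t c N u).choose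

noncomputable def G (c : ℤ_[p]ˣ) (k N : ℕ) : ℤ_[p] :=
  ∑ u : (ZMod (p ^ (N + 1)))ˣ,
    ((c : ℤ_[p]) * ((u : ZMod (p ^ (N + 1))).val : ℤ_[p])) ^ (k - 1) * tt c (N + 1) u

lemma exists_e (c : ℤ_[p]ˣ) (k N : ℕ) : ∃ e : ℤ_[p],
    (1 - (c : ℤ_[p]) ^ k) * ∑ u : (ZMod (p ^ (N + 1)))ˣ,
      ((u : ZMod (p ^ (N + 1))).val : ℤ_[p]) ^ k =
    k * (p : ℤ_[p]) ^ (N + 1) * G c k N + e * ((p : ℤ_[p]) ^ (N + 1)) ^ 2 := by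
  have hperm : ∑ u : (ZMod (p ^ (N + 1)))ˣ, ((u : ZMod (p ^ (N + 1))).val : ℤ_[p]) ^ k =
      ∑ u : (ZMod (p ^ (N + 1)))ˣ,
        (((red c (N + 1) * u : (ZMod (p ^ (N + 1)))ˣ) : ZMod (p ^ (N + 1))).val : ℤ_[p]) ^ k :=
    (Equiv.sum_comp (Equiv.mulLeft (red c (N + 1)))
      (fun u : (ZMod (p ^ (N + 1)))ˣ => ((u : ZMod (p ^ (N + 1))).val : ℤ_[p]) ^ k)).symm
  have key : ∀ u : (ZMod (p ^ (N + 1)))ˣ, ∃ e : ℤ_[p],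
      (((red c (N + 1) * u : (ZMod (p ^ (N + 1)))ˣ) : ZMod (p ^ (N + 1))).val : ℤ_[p]) ^ k =
      (c : ℤ_[p]) ^ k * ((u : ZMod (p ^ (N + 1))).val : ℤ_[p]) ^ k +
      k * (p : ℤ_[p]) ^ (N + 1) * (((c : ℤ_[p]) * ((u : ZMod (p ^ (N + 1))).val : ℤ_[p])) ^ (k - 1)
        * tt c (N + 1) u) + e * ((p : ℤ_[p]) ^ (N + 1)) ^ 2 := by
    intro u
    rw [(exists_t c (N + 1) u).choose_spec]
    obtain ⟨e, he⟩ := Polynomial.powAddExpansion ((c : ℤ_[p]) * ((u : ZMod (p ^ (N + 1))).val : ℤ_[p]))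
      ((exists_t c (N + 1) u).choose * (p : ℤ_[p]) ^ (N + 1)) k
    refine ⟨e * (tt c (N + 1) u) ^ 2, ?_⟩
    rw [he]
    unfold tt
    ring
  choose e he using key
  refine ⟨∑ u, e u, ?_⟩
  simp_rw [he] at hperm
  rw [Finset.sum_add_distrib, Finset.sum_add_distrib, ← Finset.mul_sum,
    ← Finset.mul_sum, ← Finset.sum_mul] at hperm
  rw [G]
  linear_combination hperm

lemma tendsto_G (c : ℤ_[p]ˣ) (k : ℕ) (hk : 1 ≤ k) :
    Tendsto (fun N => ((G c k N : ℤ_[p]) : ℚ_[p])) atTop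
      (𝓝 (((1 - (c : ℤ_[p]) ^ k : ℤ_[p]) : ℚ_[p]) *
          ((((1 - (p : ℚ) ^ (k - 1)) * (bernoulli k / (k : ℚ))) : ℚ) : ℚ_[p]))) := by
  have hp0 : (p : ℚ_[p]) ≠ 0 := by exact_mod_cast hp.out.ne_zero
  have hk0 : (k : ℚ_[p]) ≠ 0 := by exact_mod_cast (by omega : k ≠ 0)
  choose e he using exists_e c k
  have hpN : Tendsto (fun N : ℕ => (p : ℚ_[p]) ^ (N + 1)) atTop (𝓝 0) :=
    (tendsto_add_atTop_iff_nat 1).2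
      (tendsto_pow_atTop_nhds_zero_of_norm_lt_one Padic.norm_p_lt_one)
  have herr : Tendsto (fun N : ℕ => (p : ℚ_[p]) ^ (N + 1) * ((e N : ℤ_[p]) : ℚ_[p])) atTop (𝓝 0) := by
    refine squeeze_zero_norm (fun N => ?_) (tendsto_zero_iff_norm_tendsto_zero.1 hpN)
    rw [norm_mul]
    exact mul_le_of_le_one_right (norm_nonneg _) (PadicInt.norm_le_one _)
  have h := (((tendsto_F (p := p) k hk).const_mul (((1 - (c : ℤ_[p]) ^ k : ℤ_[p]) : ℚ_[p]))).sub
    herr).div_const (k : ℚ_[p])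
  convert h using 1
  · funext N
    have h2 := congrArg (fun x : ℤ_[p] => (x : ℚ_[p])) (he N)
    rw [PadicInt.coe_mul, PadicInt.coe_sum] at h2
    simp only [PadicInt.coe_add, PadicInt.coe_mul, PadicInt.coe_pow, PadicInt.coe_natCast] at h2
    rw [mul_div_assoc', h2]
    field_simp
    ring
  · congr 1
    push_cast
    field_simp
    ring

lemma G_congr (c : ℤ_[p]ˣ) (m n i N : ℕ) (hm : 1 ≤ m) (hn : 1 ≤ n)
    (hmn : m ≡ n [MOD (p - 1) * p ^ i]) : ‖G c m N - G c n N‖ ≤ (p : ℝ) ^ (-((i + 1 : ℕ) : ℤ)) := by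
  rw [PadicInt.norm_le_pow_iff_mem_span_pow, ← PadicInt.ker_toZModPow, RingHom.mem_ker, map_sub,
    sub_eq_zero]
  unfold G
  rw [map_sum, map_sum]
  refine Finset.sum_congr rfl fun u _ => ?_
  rw [map_mul, map_mul]
  congr 1
  have hu : IsUnit ((c : ℤ_[p]) * ((u : ZMod (p ^ (N + 1))).val : ℤ_[p])) := by
    refine c.isUnit.mul ?_
    have h := ZMod.val_coe_unit_coprime u
    rw [Nat.coprime_pow_right_iff (by omega)] at h
    rw [PadicInt.isUnit_iff]
    exact (PadicInt.norm_natCast_eq_one_iff).2 h.symm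
  obtain ⟨x, hx⟩ := hu
  rw [← hx]
  have h1 : m - 1 ≡ n - 1 [MOD (p ^ (i + 1)).totient] := by
    rw [Nat.totient_prime_pow_succ hp.out, mul_comm]
    refine Nat.ModEq.add_right_cancel' 1 ?_
    rwa [Nat.sub_add_cancel hm, Nat.sub_add_cancel hn]
  have h2 : (red x (i + 1)) ^ (m - 1) = (red x (i + 1)) ^ (n - 1) :=
    pow_eq_pow_iff_modEq.2 (h1.of_dvd (orderOf_dvd_of_pow_eq_one (ZMod.pow_totient _)))
  have h3 := congrArg Units.val h2
  simpa [red] using h3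

end RegKummer

/-- regularized Kümmer congruences at an odd prime `p`.  If `c ∈ ℤ_p^×`,
`c ≠ ±1`, and `m ≡ n (mod (p−1)pⁱ)` with `m, n ≥ 1`, then
`(1 − cᵐ)(1 − p^{m−1})·B_m/m − (1 − cⁿ)(1 − p^{n−1})·B_n/n ∈ p^{i+1}·ℤ_p`. -/
theorem regularized_kummer_congruence (p : ℕ) [Fact p.Prime] (hp : p ≠ 2) (c : ℤ_[p]ˣ)
    (hc1 : (c : ℤ_[p]) ≠ 1) (hc2 : (c : ℤ_[p]) ≠ -1)
    (m n : ℕ) (hm : 1 ≤ m) (hn : 1 ≤ n) (i : ℕ)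
    (hmn : m ≡ n [MOD (p - 1) * p ^ i]) :
    ∃ y : ℤ_[p],
      ((1 - (c : ℤ_[p]) ^ m : ℤ_[p]) : ℚ_[p]) *
          ((((1 - (p : ℚ) ^ (m - 1)) * (bernoulli m / (m : ℚ))) : ℚ) : ℚ_[p]) -
        ((1 - (c : ℤ_[p]) ^ n : ℤ_[p]) : ℚ_[p]) *
          ((((1 - (p : ℚ) ^ (n - 1)) * (bernoulli n / (n : ℚ))) : ℚ) : ℚ_[p]) =
      (p : ℚ_[p]) ^ (i + 1) * (y : ℚ_[p]) := by
  have hlim := (RegKummer.tendsto_G c m hm).sub (RegKummer.tendsto_G c n hn)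
  have hle := le_of_tendsto' hlim.norm (fun N => RegKummer.G_congr c m n i N hm hn hmn)
  have hp0 : (p : ℚ_[p]) ≠ 0 := by exact_mod_cast (Fact.out : p.Prime).ne_zero
  generalize ((1 - (c : ℤ_[p]) ^ m : ℤ_[p]) : ℚ_[p]) *
          ((((1 - (p : ℚ) ^ (m - 1)) * (bernoulli m / (m : ℚ))) : ℚ) : ℚ_[p]) -
        ((1 - (c : ℤ_[p]) ^ n : ℤ_[p]) : ℚ_[p]) *
          ((((1 - (p : ℚ) ^ (n - 1)) * (bernoulli n / (n : ℚ))) : ℚ) : ℚ_[p]) = D at hle ⊢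
  have hpos : (0 : ℝ) < (p : ℝ) ^ (i + 1) :=
    pow_pos (by exact_mod_cast (Fact.out : p.Prime).pos) _
  refine ⟨⟨D / (p : ℚ_[p]) ^ (i + 1), ?_⟩, ?_⟩
  · rw [zpow_neg, zpow_natCast] at hle
    rw [norm_div, norm_pow, Padic.norm_p, inv_pow, div_inv_eq_mul]
    calc ‖D‖ * (p : ℝ) ^ (i + 1) ≤ ((p : ℝ) ^ (i + 1))⁻¹ * (p : ℝ) ^ (i + 1) := by gcongr
      _ = 1 := inv_mul_cancel₀ hpos.ne'
  · simp only
    field_simp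
end

section
/- Let c ∈ ℤ_2^× with c ≠ 1 and c ≠ −1. If m, n ≥ 1 and i ≥ 1 are integers with m ≡ n modulo 2^i, then (1 − c^m)(1 − 2^{m−1})·B_m/m − (1 − c^n)(1 − 2^{n−1})·B_n/n lies in 2^{i+2}·ℤ_2. -/
lemma faul (m : ℕ) : ∃ D : ℕ, 0 < D ∧ ∀ M : ℕ, ∃ z : ℤ,
    (D : ℚ) * (∑ a ∈ Finset.range M, (a : ℚ) ^ m - bernoulli m * M) = (M : ℚ) ^ 2 * z := by
  have key : ∀ s : Finset ℕ, ∀ f : ℕ → ℚ, ∀ e : ℕ → ℕ, ∃ D : ℕ, 0 < D ∧ ∀ M : ℕ, ∃ z : ℤ,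
      (D : ℚ) * ∑ i ∈ s, f i * (M : ℚ) ^ (e i) = z := by
    intro s f e
    induction s using Finset.induction_on with
    | empty => exact ⟨1, one_pos, fun M => ⟨0, by simp⟩⟩
    | insert a s ha ih =>
      obtain ⟨D, hD, h⟩ := ih
      refine ⟨D * (f a).den, Nat.mul_pos hD (f a).den_pos, fun M => ?_⟩
      obtain ⟨z, hz⟩ := h M
      refine ⟨(f a).den * z + D * (f a).num * M ^ (e a), ?_⟩
      rw [Finset.sum_insert ha]
      have := Rat.mul_den_eq_num (f a)
      push_cast
      rw [← hz, ← this]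
      ring
  obtain ⟨D, hD, h⟩ := key (Finset.range m)
    (fun i => bernoulli i * ((m + 1).choose i : ℚ) / (m + 1)) (fun i => m - 1 - i)
  refine ⟨D, hD, fun M => ?_⟩
  obtain ⟨z, hz⟩ := h M
  refine ⟨z, ?_⟩
  rw [← hz, sum_range_pow, Finset.sum_range_succ]
  have h1 : bernoulli m * ((m + 1).choose m : ℚ) * (M : ℚ) ^ (m + 1 - m) / (m + 1)
      = bernoulli m * M := by
    have : (m : ℚ) + 1 ≠ 0 := by positivity
    rw [Nat.choose_succ_self_right, Nat.add_sub_cancel_left]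
    push_cast
    field_simp
  rw [h1, add_sub_cancel_right, mul_left_comm, Finset.mul_sum (a := (M : ℚ) ^ 2)]
  congr 1
  refine Finset.sum_congr rfl fun i hi => ?_
  have hi := Finset.mem_range.1 hi
  have : m + 1 - i = 2 + (m - 1 - i) := by omega
  rw [this, pow_add]
  ring

lemma split_sum (f : ℕ → ℚ) (K : ℕ) : ∑ a ∈ Finset.range (2 * K), f a =
    ∑ b ∈ Finset.range K, f (2 * b) + ∑ b ∈ Finset.range K, f (2 * b + 1) := by
  induction K with
  | zero => simp
  | succ K ih =>
    rw [show 2 * (K + 1) = 2 * K + 1 + 1 by ring, Finset.sum_range_succ, Finset.sum_range_succ, ih,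
      Finset.sum_range_succ, Finset.sum_range_succ]
    ring

lemma oddsum (m : ℕ) (hm : 1 ≤ m) : ∃ D : ℕ, 0 < D ∧ ∀ K : ℕ, ∃ z : ℤ,
    (D : ℚ) * (∑ b ∈ Finset.range K, ((2 * b + 1 : ℕ) : ℚ) ^ m
      - (1 - 2 ^ (m - 1)) * bernoulli m * (2 * K)) = (K : ℚ) ^ 2 * z := by
  obtain ⟨D, hD, h⟩ := faul m
  refine ⟨D, hD, fun K => ?_⟩
  obtain ⟨z1, h1⟩ := h (2 * K)
  obtain ⟨z2, h2⟩ := h K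
  refine ⟨4 * z1 - 2 ^ m * z2, ?_⟩
  have e : ∑ b ∈ Finset.range K, ((2 * b : ℕ) : ℚ) ^ m
      = 2 ^ m * ∑ b ∈ Finset.range K, (b : ℚ) ^ m := by
    rw [Finset.mul_sum]
    exact Finset.sum_congr rfl fun b _ => by push_cast; rw [mul_pow]
  rw [split_sum, e] at h1
  have e2 : (2 : ℚ) ^ m = 2 * 2 ^ (m - 1) := by
    rw [← pow_succ', Nat.sub_add_cancel hm]
  push_cast at h1 ⊢
  rw [e2] at h1 ⊢
  linear_combination h1 - 2 * 2 ^ (m - 1) * h2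

lemma perm_sum (C K : ℕ) (hC : Nat.Coprime C (2 * K)) (hK : 0 < K) (f : ℕ → ℤ) :
    ∑ b ∈ Finset.range K, f (C * (2 * b + 1) % (2 * K)) =
      ∑ b ∈ Finset.range K, f (2 * b + 1) := by
  have hodd : C % 2 = 1 := by
    have : Nat.Coprime C 2 := Nat.Coprime.coprime_mul_right_right hC
    exact Nat.odd_iff.1 (Nat.coprime_two_right.1 this)
  have hr : ∀ b, 2 * (C * (2 * b + 1) % (2 * K) / 2) + 1 = C * (2 * b + 1) % (2 * K) := by
    intro b
    have : C * (2 * b + 1) % (2 * K) % 2 = 1 := by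
      rw [Nat.mod_mul_right_mod, Nat.mul_mod, hodd]; omega
    omega
  have hmaps : Set.MapsTo (fun b => C * (2 * b + 1) % (2 * K) / 2) (Finset.range K : Set ℕ)
      (Finset.range K : Set ℕ) := by
    intro b _
    have : C * (2 * b + 1) % (2 * K) < 2 * K := Nat.mod_lt _ (by omega)
    simp only [Finset.coe_range, Set.mem_Iio]
    omega
  have hinj : Set.InjOn (fun b => C * (2 * b + 1) % (2 * K) / 2) (Finset.range K : Set ℕ) := by
    intro b hb b' hb' h
    simp only [Finset.coe_range, Set.mem_Iio] at hb hb' h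
    have h2 : C * (2 * b + 1) % (2 * K) = C * (2 * b' + 1) % (2 * K) := by
      rw [← hr b, ← hr b', h]
    have h3 : 2 * b + 1 ≡ 2 * b' + 1 [MOD 2 * K] :=
      Nat.ModEq.cancel_left_of_coprime (Nat.Coprime.symm hC) h2
    have := Nat.ModEq.eq_of_lt_of_lt h3 (by omega) (by omega)
    omega
  refine Finset.sum_nbij (fun b => C * (2 * b + 1) % (2 * K) / 2) hmaps hinj
    (Finset.surjOn_of_injOn_of_card_le _ hmaps hinj le_rfl) ?_
  intro b _
  rw [hr]

/-- the Riemann sum -/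
def QS (C K m : ℕ) : ℤ := ∑ b ∈ Finset.range K,
  ((C * (2 * b + 1) / (2 * K) : ℕ) : ℤ) * ((C * (2 * b + 1) : ℕ) : ℤ) ^ (m - 1)

lemma voronoi (C K m : ℕ) (hC : Nat.Coprime C (2 * K)) (hK : 0 < K) : ∃ W : ℤ,
    ((C : ℤ) ^ m - 1) * ∑ b ∈ Finset.range K, ((2 * b + 1 : ℕ) : ℤ) ^ m =
      m * (2 * K) * QS C K m - (2 * K) ^ 2 * W := by
  have h := perm_sum C K hC hK (fun a => (a : ℤ) ^ m)
  have hb : ∀ b : ℕ, ∃ w : ℤ, ((C * (2 * b + 1) % (2 * K) : ℕ) : ℤ) ^ m =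
      (C : ℤ) ^ m * ((2 * b + 1 : ℕ) : ℤ) ^ m - m * (2 * K) *
      (((C * (2 * b + 1) / (2 * K) : ℕ) : ℤ) * ((C * (2 * b + 1) : ℕ) : ℤ) ^ (m - 1))
      + (2 * K) ^ 2 * w := by
    intro b
    have e : ((C * (2 * b + 1) % (2 * K) : ℕ) : ℤ) = ((C * (2 * b + 1) : ℕ) : ℤ)
        + -(2 * K * ((C * (2 * b + 1) / (2 * K) : ℕ) : ℤ)) := by
      have := Nat.mod_add_div (C * (2 * b + 1)) (2 * K)
      zify at this
      push_cast
      linarith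
    obtain ⟨k, hk⟩ := Polynomial.powAddExpansion ((C * (2 * b + 1) : ℕ) : ℤ)
      (-(2 * K * ((C * (2 * b + 1) / (2 * K) : ℕ) : ℤ))) m
    refine ⟨((C * (2 * b + 1) / (2 * K) : ℕ) : ℤ) ^ 2 * k, ?_⟩
    rw [e, hk, Nat.cast_mul C, mul_pow (C : ℤ)]
    ring
  choose w hw using hb
  refine ⟨∑ b ∈ Finset.range K, w b, ?_⟩
  simp only [hw, Finset.sum_add_distrib, Finset.sum_sub_distrib, ← Finset.mul_sum] at h
  unfold QS
  linear_combination h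

lemma approx (C m : ℕ) (hm : 1 ≤ m) : ∃ D : ℕ, 0 < D ∧ ∀ K : ℕ, 0 < K →
    Nat.Coprime C (2 * K) → ∃ z : ℤ,
    (D : ℚ) * (((C : ℚ) ^ m - 1) * ((1 - 2 ^ (m - 1)) * (bernoulli m / m)) - QS C K m) = K * z := by
  obtain ⟨D, hD, h⟩ := oddsum m hm
  refine ⟨2 * D * m, by positivity, fun K hK hC => ?_⟩
  obtain ⟨z, hz⟩ := h K
  obtain ⟨W, hW⟩ := voronoi C K m hC hK
  refine ⟨-(4 * D * W) - (C ^ m - 1) * z, ?_⟩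
  have hW' := congrArg (Int.cast : ℤ → ℚ) hW
  push_cast at hW' hz ⊢
  have hK' : (K : ℚ) ≠ 0 := by positivity
  have hm' : (m : ℚ) ≠ 0 := by positivity
  field_simp
  apply mul_left_cancel₀ hK'
  linear_combination (-((C : ℚ) ^ m - 1)) * hz + D * hW'

lemma odd_pow_aux (i : ℕ) (hi : 1 ≤ i) (x : ℤ) (hx : Odd x) : (2 : ℤ) ^ (i + 2) ∣ x ^ 2 ^ i - 1 := by
  induction i, hi using Nat.le_induction with
  | base =>
    have := Int.eight_dvd_sq_sub_one_of_odd hx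
    simpa using this
  | succ i hi ih =>
    have e : x ^ 2 ^ (i + 1) - 1 = (x ^ 2 ^ i - 1) * (x ^ 2 ^ i + 1) := by ring
    rw [e, show i + 1 + 2 = (i + 2) + 1 by ring, pow_succ]
    exact mul_dvd_mul ih (even_iff_two_dvd.1 (hx.pow.add_one))

lemma odd_pow_le (i : ℕ) (hi : 1 ≤ i) (x : ℤ) (hx : Odd x) (m n : ℕ) (hmn : m ≡ n [MOD 2 ^ i])
    (hle : m ≤ n) : (2 : ℤ) ^ (i + 2) ∣ x ^ n - x ^ m := by
  obtain ⟨k, hk⟩ := (Nat.modEq_iff_dvd' hle).1 hmn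
  have : n = m + 2 ^ i * k := by omega
  rw [this, pow_add x, pow_mul]
  have h1 : x ^ 2 ^ i - 1 ∣ (x ^ 2 ^ i) ^ k - 1 := by simpa using sub_dvd_pow_sub_pow (x ^ 2 ^ i) 1 k
  have := ((odd_pow_aux i hi x hx).trans h1).mul_left (x ^ m)
  rwa [mul_sub, mul_one] at this

lemma QS_congr (C K m n i : ℕ) (hi : 1 ≤ i) (hC : Odd C) (hm : 1 ≤ m) (hn : 1 ≤ n)
    (hmn : m ≡ n [MOD 2 ^ i]) : (2 : ℤ) ^ (i + 2) ∣ QS C K m - QS C K n := by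
  unfold QS
  rw [← Finset.sum_sub_distrib]
  refine Finset.dvd_sum fun b _ => ?_
  rw [← mul_sub]
  apply Dvd.dvd.mul_left
  have hx : Odd ((C * (2 * b + 1) : ℕ) : ℤ) := by
    rw [Int.odd_coe_nat]
    exact hC.mul ⟨b, rfl⟩
  have hmn' : m - 1 ≡ n - 1 [MOD 2 ^ i] := by
    apply Nat.ModEq.add_right_cancel' 1
    rwa [Nat.sub_add_cancel hm, Nat.sub_add_cancel hn]
  rcases le_total (m - 1) (n - 1) with h | h
  · rw [dvd_sub_comm]
    exact odd_pow_le i hi _ hx _ _ hmn' h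
  · exact odd_pow_le i hi _ hx _ _ hmn'.symm h

lemma nat_case (C m n i : ℕ) (hi : 1 ≤ i) (hC : Odd C) (hm : 1 ≤ m) (hn : 1 ≤ n)
    (hmn : m ≡ n [MOD 2 ^ i]) : ∃ (u : ℕ) (z : ℤ), Odd u ∧
    (u : ℚ) * (((C : ℚ) ^ m - 1) * ((1 - 2 ^ (m - 1)) * (bernoulli m / m))
     - ((C : ℚ) ^ n - 1) * ((1 - 2 ^ (n - 1)) * (bernoulli n / n))) = 2 ^ (i + 2) * z := by
  obtain ⟨D1, hD1, h1⟩ := approx C m hm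
  obtain ⟨D2, hD2, h2⟩ := approx C n hn
  obtain ⟨e, u, hu, he⟩ := Nat.exists_eq_two_pow_mul_odd (n := D1 * D2) (by positivity)
  have hcop : Nat.Coprime C (2 * 2 ^ (e + i + 2)) := by
    rw [← pow_succ']
    exact Nat.Coprime.pow_right _ (Nat.coprime_two_right.2 hC)
  obtain ⟨z1, h1⟩ := h1 (2 ^ (e + i + 2)) (by positivity) hcop
  obtain ⟨z2, h2⟩ := h2 (2 ^ (e + i + 2)) (by positivity) hcop
  obtain ⟨t, ht⟩ := QS_congr C (2 ^ (e + i + 2)) m n i hi hC hm hn hmn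
  refine ⟨u, D2 * z1 - D1 * z2 + u * t, hu, ?_⟩
  have ht' := congrArg (Int.cast : ℤ → ℚ) ht
  have he' := congrArg (Nat.cast : ℕ → ℚ) he
  push_cast at ht' he' h1 h2 ⊢
  have h2e : (2 : ℚ) ^ e ≠ 0 := by positivity
  apply mul_left_cancel₀ h2e
  rw [← mul_assoc, ← he']
  have hp : (2 : ℚ) ^ (e + i + 2) = 2 ^ e * 2 ^ (i + 2) := by ring
  rw [hp] at h1 h2
  linear_combination D2 * h1 - D1 * h2 + D1 * D2 * ht' + 2 ^ (i + 2) * t * he'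

lemma term_small (c : ℤ_[2]) (m : ℕ) (β : ℚ_[2]) (r : ℝ) (hr : 0 < r) : ∃ s0 : ℕ, ∀ s, s0 ≤ s →
    ‖((c ^ m - (c.appr s : ℤ_[2]) ^ m : ℤ_[2]) : ℚ_[2]) * β‖ ≤ r := by
  have ht : Filter.Tendsto (fun s : ℕ => ((2 : ℝ)⁻¹) ^ s * ‖β‖) Filter.atTop (nhds 0) := by
    simpa using (tendsto_pow_atTop_nhds_zero_of_lt_one (r := (2 : ℝ)⁻¹)
      (by norm_num) (by norm_num)).mul_const ‖β‖
  obtain ⟨s0, h⟩ := Filter.eventually_atTop.1 (ht.eventually (gt_mem_nhds hr))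
  refine ⟨s0, fun s hs => le_trans ?_ (h s hs).le⟩
  rw [norm_mul]
  gcongr
  have h1 := PadicInt.appr_spec s c
  rw [Ideal.mem_span_singleton] at h1
  have h2 := h1.trans (sub_dvd_pow_sub_pow c (c.appr s : ℤ_[2]) m)
  have h3 := (PadicInt.norm_le_pow_iff_mem_span_pow _ s).2 (Ideal.mem_span_singleton.2 h2)
  rw [← PadicInt.norm_def]
  simpa [zpow_neg] using h3

/-- regularized Kümmer congruences at `p = 2`.  If `c ∈ ℤ_2^×`, `c ≠ ±1`,
and `m ≡ n (mod 2ⁱ)` with `m, n ≥ 1` and `i ≥ 1`, then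
`(1 − cᵐ)(1 − 2^{m−1})·B_m/m − (1 − cⁿ)(1 − 2^{n−1})·B_n/n ∈ 2^{i+2}·ℤ_2`. -/
theorem regularized_kummer_congruence_two (c : ℤ_[2]ˣ)
    (hc1 : (c : ℤ_[2]) ≠ 1) (hc2 : (c : ℤ_[2]) ≠ -1)
    (m n : ℕ) (hm : 1 ≤ m) (hn : 1 ≤ n) (i : ℕ) (hi : 1 ≤ i)
    (hmn : m ≡ n [MOD 2 ^ i]) :
    ∃ y : ℤ_[2],
      ((1 - (c : ℤ_[2]) ^ m : ℤ_[2]) : ℚ_[2]) *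
          ((((1 - (2 : ℚ) ^ (m - 1)) * (bernoulli m / (m : ℚ))) : ℚ) : ℚ_[2]) -
        ((1 - (c : ℤ_[2]) ^ n : ℤ_[2]) : ℚ_[2]) *
          ((((1 - (2 : ℚ) ^ (n - 1)) * (bernoulli n / (n : ℚ))) : ℚ) : ℚ_[2]) =
      (2 : ℚ_[2]) ^ (i + 2) * (y : ℚ_[2]) := by
  set r : ℝ := (2 : ℝ) ^ (-((i + 2 : ℕ) : ℤ)) with hr
  have hr0 : 0 < r := by positivity
  set βm : ℚ := (1 - (2 : ℚ) ^ (m - 1)) * (bernoulli m / (m : ℚ)) with hβm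
  set βn : ℚ := (1 - (2 : ℚ) ^ (n - 1)) * (bernoulli n / (n : ℚ)) with hβn
  obtain ⟨s1, h1⟩ := term_small c m (βm : ℚ_[2]) r hr0
  obtain ⟨s2, h2⟩ := term_small c n (βn : ℚ_[2]) r hr0
  obtain ⟨s, hs1, hs2, hs3⟩ : ∃ s, s1 ≤ s ∧ s2 ≤ s ∧ 1 ≤ s :=
    ⟨s1 + s2 + 1, by omega, by omega, by omega⟩
  replace h1 := h1 s hs1
  replace h2 := h2 s hs2
  set C : ℕ := (c : ℤ_[2]).appr s with hCdef
  have hC : Odd C := by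
    by_contra hev
    rw [Nat.not_odd_iff_even] at hev
    have e1 := PadicInt.appr_spec s (c : ℤ_[2])
    rw [Ideal.mem_span_singleton] at e1
    have e2 : (2 : ℤ_[2]) ∣ (c : ℤ_[2]) - (C : ℤ_[2]) := by
      refine dvd_trans ?_ e1
      simpa using dvd_pow_self (2 : ℤ_[2]) (by omega : s ≠ 0)
    have e3 : (2 : ℤ_[2]) ∣ (C : ℤ_[2]) := by
      obtain ⟨k, hk⟩ := even_iff_two_dvd.1 hev
      exact ⟨k, by rw [hk]; push_cast; rfl⟩
    have e4 : (2 : ℤ_[2]) ∣ (c : ℤ_[2]) := by simpa using dvd_add e2 e3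
    have e5 : IsUnit (2 : ℤ_[2]) := isUnit_of_dvd_unit e4 c.isUnit
    have := PadicInt.prime_p (p := 2)
    exact this.not_isUnit (by simpa using e5)
  obtain ⟨u, z, hu, hz⟩ := nat_case C m n i hi hC hm hn hmn
  rw [← hβm, ← hβn] at hz
  have hz' := congrArg (Rat.cast : ℚ → ℚ_[2]) hz
  push_cast at hz'
  have hun : ‖(u : ℚ_[2])‖ = 1 := by
    rw [Padic.norm_natCast_eq_one_iff]
    exact (Nat.coprime_two_left.2 hu)
  have h3 : ‖((C : ℚ_[2]) ^ m - 1) * (βm : ℚ_[2]) - ((C : ℚ_[2]) ^ n - 1) * (βn : ℚ_[2])‖ ≤ r := by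
    have := congrArg norm hz'
    rw [norm_mul, hun, one_mul, norm_mul] at this
    rw [this]
    have e1 : ‖(2 : ℚ_[2]) ^ (i + 2)‖ = r := by
      have := Padic.norm_p_pow (p := 2) (i + 2)
      rw [hr]; exact_mod_cast this
    rw [e1]
    exact mul_le_of_le_one_right hr0.le (Padic.norm_int_le_one z)
  have hfin : ‖((1 - (c : ℤ_[2]) ^ m : ℤ_[2]) : ℚ_[2]) * (βm : ℚ_[2]) -
      ((1 - (c : ℤ_[2]) ^ n : ℤ_[2]) : ℚ_[2]) * (βn : ℚ_[2])‖ ≤ r := by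
    have e : ((1 - (c : ℤ_[2]) ^ m : ℤ_[2]) : ℚ_[2]) * (βm : ℚ_[2]) -
      ((1 - (c : ℤ_[2]) ^ n : ℤ_[2]) : ℚ_[2]) * (βn : ℚ_[2]) =
      (((((c : ℤ_[2]) ^ n - (C : ℤ_[2]) ^ n : ℤ_[2]) : ℚ_[2]) * (βn : ℚ_[2])) -
       ((((c : ℤ_[2]) ^ m - (C : ℤ_[2]) ^ m : ℤ_[2]) : ℚ_[2]) * (βm : ℚ_[2]))) -
      (((C : ℚ_[2]) ^ m - 1) * (βm : ℚ_[2]) - ((C : ℚ_[2]) ^ n - 1) * (βn : ℚ_[2])) := by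
      push_cast
      ring
    rw [e]
    have na : ∀ x y : ℚ_[2], ‖x‖ ≤ r → ‖y‖ ≤ r → ‖x - y‖ ≤ r := by
      intro x y hx hy
      have := Padic.nonarchimedean x (-y)
      rw [norm_neg, ← sub_eq_add_neg] at this
      exact this.trans (max_le hx hy)
    exact na _ _ (na _ _ h2 h1) h3
  have h20 : (2 : ℚ_[2]) ^ (i + 2) ≠ 0 := pow_ne_zero _ two_ne_zero
  generalize ((1 - (c : ℤ_[2]) ^ m : ℤ_[2]) : ℚ_[2]) * (βm : ℚ_[2]) -
      ((1 - (c : ℤ_[2]) ^ n : ℤ_[2]) : ℚ_[2]) * (βn : ℚ_[2]) = X at hfin ⊢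
  have e1 : ‖(2 : ℚ_[2]) ^ (i + 2)‖ = r := by
    have := Padic.norm_p_pow (p := 2) (i + 2)
    rw [hr]; exact_mod_cast this
  refine ⟨⟨X / 2 ^ (i + 2), ?_⟩, ?_⟩
  · rw [norm_div, e1]
    exact div_le_one_of_le₀ hfin hr0.le
  · show X = 2 ^ (i + 2) * (X / 2 ^ (i + 2))
    field_simp
end

section
/- Let p be a prime and let c ∈ ℤ_p^× with c ≠ 1 and c ≠ −1. Let R := ℤ((t))^∧_p be the p-adic completion of the Laurent series ring ℤ((t)), and let ζ := p^{−1}·((t^{−1} − 1)^p − t^{−p} + 1), a polynomial in t^{−1} with integer coefficients. For each n ≥ 1 define M_n ∈ R by M_n := (1 − c^n)·∑_{m=1}^n ((−1)^{m−1}·Δ^m[r^n](0)/m)·( t^{−m} − p^{n−1}·t^{−pm}·(1 − pζ)^{−m} ), where the inverse of 1 − pζ is taken in R. Then there exists M_0 ∈ R such that (M_n)_{n≥0} is an R-valued p-adic moment sequence: for every polynomial f(r) = ∑_{n=0}^N a_n r^n with rational coefficients satisfying f(x) ∈ ℤ_p for every x ∈ ℤ_p^×, the element ∑_{n=0}^N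 a_n·M_n of R ⊗ ℚ lies in the image of R. -/
open scoped TensorProduct

set_option synthInstance.maxHeartbeats 1000000
set_option maxHeartbeats 1000000

/-- An `A`-valued `p`-adic moment sequence: for every polynomial `f(r) = ∑ aₙ rⁿ` with
rational coefficients taking `ℤ_p`-integral values on `ℤ_p^×`, the element
`∑ aₙ · Mₙ` of `A ⊗ ℚ` lies in the image of the natural map `A → A ⊗ ℚ`. -/
def IsPadicMomentSeq (p : ℕ) [Fact p.Prime] {A : Type*} [CommRing A] (M : ℕ → A) : Prop :=
  ∀ f : Polynomial ℚ,
    (∀ x : ℤ_[p]ˣ, ‖Polynomial.aeval ((x : ℤ_[p]) : ℚ_[p]) f‖ ≤ 1) →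
    ∃ y : A, (∑ n ∈ f.support, (M n) ⊗ₜ[ℤ] (f.coeff n)) = y ⊗ₜ[ℤ] (1 : ℚ)

noncomputable section

/-- The ring `R = ℤ((t))^∧_p`, the `p`-adic completion of the ring of formal Laurent
series (realized with `ℤ_p`-coefficients, via the canonical identification
`ℤ((t))^∧_p ≅ ℤ_p((t))^∧_p`). -/
abbrev ToddRing (p : ℕ) [Fact p.Prime] : Type :=
  AdicCompletion (Ideal.span {(p : LaurentSeries ℤ_[p])}) (LaurentSeries ℤ_[p])

/-- The element `t⁻¹` of `R`. -/
def tinv (p : ℕ) [Fact p.Prime] : ToddRing p :=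
  algebraMap (LaurentSeries ℤ_[p]) (ToddRing p) (HahnSeries.single (-1 : ℤ) (1 : ℤ_[p]))

/-- `Δ^m[rⁿ](0) = ∑_{j=0}^m (−1)^{m−j}·C(m,j)·jⁿ`, the `m`-th forward finite difference
of the polynomial `r ↦ rⁿ` evaluated at `0`. -/
def finiteDiff (m n : ℕ) : ℤ :=
  ∑ j ∈ Finset.range (m + 1), (-1) ^ (m - j) * (m.choose j : ℤ) * (j : ℤ) ^ n

theorem finiteDiff_eq_fwd (m n : ℕ) :
    (fwdDiff (1 : ℤ))^[m] (fun r : ℤ => r ^ n) 0 = finiteDiff m n := by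
  rw [fwdDiff_iter_eq_sum_shift]
  simp [finiteDiff]

theorem finiteDiff_zero_left (n : ℕ) (hn : n ≠ 0) : finiteDiff 0 n = 0 := by
  simp [finiteDiff, hn]

theorem finiteDiff_of_lt (m n : ℕ) (h : n < m) : finiteDiff m n = 0 := by
  rw [← finiteDiff_eq_fwd, fwdDiff_iter_pow_eq_zero_of_lt h]
  rfl

theorem newton_fd (j n : ℕ) (hn : n ≠ 0) :
    ∑ m ∈ Finset.Icc 1 n, finiteDiff m n * (j.choose m : ℤ) = (j : ℤ) ^ n := by
  have h := shift_eq_sum_fwdDiff_iter (1 : ℤ) (fun r : ℤ => r ^ n) j 0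
  simp only [finiteDiff_eq_fwd, zero_add, nsmul_eq_mul, mul_one] at h
  rw [h]
  have h1 : ∑ k ∈ Finset.range (j + 1), (j.choose k : ℤ) * finiteDiff k n
      = ∑ k ∈ Finset.range (n + j + 1), (j.choose k : ℤ) * finiteDiff k n := by
    apply Finset.sum_subset
    · intro x; simp only [Finset.mem_range]; omega
    · intro x _ hx
      simp only [Finset.mem_range, not_lt] at hx
      rw [Nat.choose_eq_zero_of_lt (by omega)]; simp
  rw [h1]
  rw [← Finset.sum_subset (s₁ := Finset.Icc 1 n) (s₂ := Finset.range (n + j + 1))]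
  · exact Finset.sum_congr rfl fun _ _ => mul_comm _ _
  · intro x; simp only [Finset.mem_range, Finset.mem_Icc]; omega
  · intro x _ hx
    simp only [Finset.mem_Icc, not_and, not_le] at hx
    rcases Nat.eq_zero_or_pos x with rfl | h0
    · rw [finiteDiff_zero_left n hn]; simp
    · rw [finiteDiff_of_lt x n (hx h0)]; simp

theorem dvd_finiteDiff (m n : ℕ) (hn : n ≠ 0) : (m : ℤ) ∣ finiteDiff m n := by
  unfold finiteDiff
  apply Finset.dvd_sum
  intro j _
  obtain ⟨n, rfl⟩ := Nat.exists_eq_succ_of_ne_zero hn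
  rcases j with _ | j
  · simp
  rcases m with _ | m
  · simp
  have h := Nat.add_one_mul_choose_eq m j
  have h' : ((m : ℤ) + 1) * (m.choose j : ℤ) = ((m + 1).choose (j + 1) : ℤ) * (j + 1) := by
    exact_mod_cast h
  refine ⟨(-1) ^ (m + 1 - (j + 1)) * (m.choose j : ℤ) * ((j + 1 : ℕ) : ℤ) ^ n, ?_⟩
  simp only [Nat.add_sub_add_right]
  push_cast
  rw [pow_succ ((j : ℤ) + 1) n]
  linear_combination (-1) ^ (m - j) * ((j : ℤ) + 1) ^ n * (-h')

/-- the integer coefficient -/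
def aco (m n : ℕ) : ℤ := (-1) ^ (m - 1) * finiteDiff m n / (m : ℤ)

theorem aco_mul (m n : ℕ) (hn : n ≠ 0) :
    (m : ℤ) * aco m n = (-1) ^ (m - 1) * finiteDiff m n :=
  Int.mul_ediv_cancel' (Dvd.dvd.mul_left (dvd_finiteDiff m n hn) _)

theorem newton_aco (j n : ℕ) (hn : n ≠ 0) :
    ∑ m ∈ Finset.Icc 1 n, (-1) ^ m * aco m n * (j.choose (m - 1) : ℤ)
      = - ((j : ℤ) + 1) ^ (n - 1) := by
  have hj : ((j : ℤ) + 1) ≠ 0 := by positivity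
  apply mul_left_cancel₀ hj
  have h := newton_fd (j + 1) n hn
  obtain ⟨n, rfl⟩ := Nat.exists_eq_succ_of_ne_zero hn
  push_cast at h
  simp only [Nat.succ_eq_add_one, Nat.add_sub_cancel] at h ⊢
  rw [mul_neg, ← pow_succ', ← h, Finset.mul_sum, ← Finset.sum_neg_distrib]
  apply Finset.sum_congr rfl
  intro m hm
  rw [Finset.mem_Icc] at hm
  obtain ⟨m, rfl⟩ := Nat.exists_eq_succ_of_ne_zero (n := m) (by omega)
  have h1 := aco_mul (m + 1) (n + 1) hn
  have h2 := Nat.add_one_mul_choose_eq j m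
  have h2' : ((j : ℤ) + 1) * (j.choose m : ℤ) = ((j + 1).choose (m + 1) : ℤ) * (m + 1) := by
    exact_mod_cast h2
  simp only [Nat.succ_eq_add_one, Nat.add_sub_cancel] at h1 ⊢
  push_cast at h1
  have h3 : ((-1 : ℤ) ^ m) * (-1) ^ m = 1 := by rw [← mul_pow]; simp
  rw [pow_succ]
  linear_combination (-1) ^ (m + 1) * aco (m + 1) (n + 1) * h2'
    + (-1) ^ (m + 1) * ((j + 1).choose (m + 1) : ℤ) * h1
    - finiteDiff (m + 1) (n + 1) * ((j + 1).choose (m + 1) : ℤ) * h3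

open PowerSeries in
theorem coeff_tau_pow {S : Type*} [CommRing S] (m j : ℕ) (hm : m ≠ 0) :
    coeff j ((-((X : S⟦X⟧) * mk 1)) ^ m) =
      if j = 0 then 0 else (-1) ^ m * ((j - 1).choose (m - 1) : S) := by
  obtain ⟨m, rfl⟩ := Nat.exists_eq_succ_of_ne_zero hm
  have h1 : (-((X : S⟦X⟧) * mk 1)) ^ (m + 1)
      = C ((-1) ^ (m + 1)) * (X ^ (m + 1) * (mk 1) ^ (m + 1)) := by
    rw [neg_pow, mul_pow]; simp
  rw [Nat.succ_eq_add_one, h1, coeff_C_mul, coeff_X_pow_mul', mk_one_pow_eq_mk_choose_add]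
  rcases j with _ | j
  · simp
  · simp only [coeff_mk]
    by_cases h : m ≤ j
    · have : m + (j - m) = j := by omega
      simp [h, this]
    · simp [h, Nat.choose_eq_zero_of_lt (not_le.mp h)]

open PowerSeries in
/-- the polylogarithm series -/
def Lser (S : Type*) [CommRing S] (n : ℕ) : S⟦X⟧ :=
  mk fun j => if j = 0 then 0 else (j : S) ^ (n - 1)

open PowerSeries in
theorem sum_aco_tau {S : Type*} [CommRing S] (n : ℕ) (hn : n ≠ 0) :
    ∑ m ∈ Finset.Icc 1 n, ((aco m n : ℤ) : S⟦X⟧) * (-((X : S⟦X⟧) * mk 1)) ^ m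
      = - Lser S n := by
  ext j
  rw [map_sum, map_neg, Lser, coeff_mk]
  have h0 : ∀ m ∈ Finset.Icc 1 n,
      coeff j (((aco m n : ℤ) : S⟦X⟧) * (-((X : S⟦X⟧) * mk 1)) ^ m)
      = (aco m n : S) * if j = 0 then 0 else (-1) ^ m * ((j - 1).choose (m - 1) : S) := by
    intro m hm
    rw [Finset.mem_Icc] at hm
    rw [← coeff_tau_pow m j (by omega), ← coeff_C_mul]
    simp
  rw [Finset.sum_congr rfl h0]
  rcases j with _ | j
  · simp
  · have h := congrArg (Int.cast : ℤ → S) (newton_aco j n hn)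
    push_cast at h
    simp only [Nat.succ_ne_zero, if_false, Nat.add_sub_cancel]
    push_cast
    rw [← h]
    apply Finset.sum_congr rfl
    intros; ring

open PowerSeries in
theorem coeff_Lser_sub {S : Type*} [CommRing S] (p : ℕ) (hp : p ≠ 0) (n j : ℕ) :
    coeff j (Lser S n - C ((p : S) ^ (n - 1)) * expand p hp (Lser S n)) =
      if p ∣ j then 0 else (j : S) ^ (n - 1) := by
  rw [map_sub, coeff_C_mul, coeff_expand]
  simp only [Lser, coeff_mk]
  by_cases h : p ∣ j
  · obtain ⟨k, rfl⟩ := h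
    have hk : p * k / p = k := Nat.mul_div_cancel_left _ (Nat.pos_of_ne_zero hp)
    rcases Nat.eq_zero_or_pos k with rfl | hk0
    · simp
    · simp [hk, hp, hk0.ne', mul_pow]
  · have : j ≠ 0 := by rintro rfl; simp at h
    simp [h, this]

open PowerSeries in
theorem dvd_of_coeff {S : Type*} [CommRing S] (N : S) (F : S⟦X⟧) (h : ∀ j, N ∣ coeff j F) :
    C N ∣ F := by
  choose g hg using h
  exact ⟨mk g, by ext j; rw [coeff_C_mul, coeff_mk, hg]⟩

/-- numerator polynomial of one moment -/
def Qnum (S : Type*) [CommRing S] (p d n : ℕ) : Polynomial S :=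
  ∑ m ∈ Finset.Icc 1 n, ((aco m n : ℤ) : Polynomial S) *
    ((Polynomial.X ^ p - (Polynomial.X - 1) ^ p) ^ d * Polynomial.X ^ m
      - (p : Polynomial S) ^ (n - 1) * Polynomial.X ^ (p * m) *
        (Polynomial.X ^ p - (Polynomial.X - 1) ^ p) ^ (d - m))

open PowerSeries in
theorem Qnum_tau {S : Type*} [CommRing S] (p : ℕ) (hp : p ≠ 0) (d n : ℕ) (hn : n ≠ 0)
    (hd : n ≤ d) :
    Polynomial.aeval (-((X : S⟦X⟧) * mk 1)) (Qnum S p d n) =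
      - ((-((X : S⟦X⟧) * mk 1)) ^ p - (-((X : S⟦X⟧) * mk 1) - 1) ^ p) ^ d *
        (Lser S n - C ((p : S) ^ (n - 1)) * expand p hp (Lser S n)) := by
  have h1 := sum_aco_tau (S := S) n hn
  have h2 := congrArg (expand p hp) h1
  rw [map_sum, map_neg] at h2
  have hV : (mk 1 : S⟦X⟧) * (1 - X) = 1 := mk_one_mul_one_sub_eq_one S
  have hV' := congrArg (expand p hp) hV
  simp only [map_mul, map_sub, map_one, expand_X] at hV'
  set τ : S⟦X⟧ := -((X : S⟦X⟧) * mk 1) with hτ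
  set D : S⟦X⟧ := τ ^ p - (τ - 1) ^ p with hD
  -- relation for the expanded variable
  have hs : D * expand p hp τ = τ ^ p := by
    have e1 : τ - 1 = - mk 1 := by rw [hτ]; linear_combination hV
    have e2 : expand p hp τ = -(X ^ p * expand p hp (mk 1)) := by
      rw [hτ]; simp
    rw [hD, e1, e2, hτ, neg_pow, neg_pow (mk 1 : S⟦X⟧), mul_pow]
    linear_combination (-1) ^ p * (mk 1) ^ p * X ^ p * hV'
  have e : - D ^ d * (Lser S n - C ((p : S) ^ (n - 1)) * expand p hp (Lser S n))
      = D ^ d * (- Lser S n) - C ((p : S) ^ (n - 1)) * (D ^ d * (- expand p hp (Lser S n))) := by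
    ring
  rw [e, ← h1, ← h2, Qnum, map_sum, Finset.mul_sum, Finset.mul_sum, Finset.mul_sum,
    ← Finset.sum_sub_distrib]
  apply Finset.sum_congr rfl
  intro m hm
  rw [Finset.mem_Icc] at hm
  have hdm : D ^ d = D ^ (d - m) * D ^ m := by rw [← pow_add]; congr 1; omega
  have hk : D ^ d * (expand p hp τ) ^ m = D ^ (d - m) * τ ^ (p * m) := by
    rw [hdm, mul_assoc, ← mul_pow, hs, pow_mul]
  simp only [map_mul, map_sub, map_pow, map_intCast, map_natCast, Polynomial.aeval_X, map_one,
    ← hD]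
  linear_combination (p : S⟦X⟧) ^ (n - 1) * (aco m n : S⟦X⟧) * hk

open PowerSeries in
theorem dvd_of_dvd_tau {S : Type*} [CommRing S] (N : S) (P : Polynomial S)
    (h : C N ∣ Polynomial.aeval (-((X : S⟦X⟧) * mk 1)) P) : Polynomial.C N ∣ P := by
  have hs : HasSubst (-((X : S⟦X⟧) * mk 1)) :=
    HasSubst.of_constantCoeff_zero' (by simp)
  have hV : (mk 1 : S⟦X⟧) * (1 - X) = 1 := mk_one_mul_one_sub_eq_one S
  let σ : S⟦X⟧ →ₐ[S] S⟦X⟧ := substAlgHom hs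
  have hσX : σ X = -((X : S⟦X⟧) * mk 1) := substAlgHom_X hs
  have hσ : σ (-((X : S⟦X⟧) * mk 1)) = X := by
    have h1 := congrArg σ hV
    simp only [map_mul, map_sub, map_one, hσX] at h1
    rw [map_neg, map_mul, hσX]
    have h2 : (1 - -((X : S⟦X⟧) * mk 1)) = mk 1 := by linear_combination -hV
    rw [h2] at h1
    linear_combination X * h1
  have h3 : σ (Polynomial.aeval (-((X : S⟦X⟧) * mk 1)) P) = (P : S⟦X⟧) := by
    rw [← Polynomial.aeval_algHom_apply, hσ]
    have h6 : (Polynomial.aeval (X : S⟦X⟧)) = Polynomial.coeToPowerSeries.algHom S (R := S) := by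
      apply Polynomial.algHom_ext
      simp
    rw [h6]
    simp
  have h4 := map_dvd σ h
  rw [h3] at h4
  have h5 : σ (C N) = C N := σ.commutes N
  rw [h5] at h4
  rw [Polynomial.C_dvd_iff_dvd_coeff]
  intro i
  obtain ⟨g, hg⟩ := h4
  exact ⟨coeff i g, by rw [← coeff_C_mul, ← hg, Polynomial.coeff_coe]⟩

theorem core_dvd {S R : Type*} [CommRing S] [CommRing R] (p : ℕ) (hp : p ≠ 0)
    (ι : S →+* R) (T D i : R) (hD : D = T ^ p - (T - 1) ^ p) (hi : D * i = 1)
    (s : Finset ℕ) (β : ℕ → S) (hβ : β 0 = 0) (N : S)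
    (h : ∀ j : ℕ, ¬ p ∣ j → N ∣ ∑ n ∈ s, β n * (j : S) ^ (n - 1)) :
    ι N ∣ ∑ n ∈ s, ι (β n) * ∑ m ∈ Finset.Icc 1 n, ((aco m n : ℤ) : R) *
      (T ^ m - (p : R) ^ (n - 1) * T ^ (p * m) * i ^ m) := by
  set d := s.sup id with hd
  set P : Polynomial S := ∑ n ∈ s, Polynomial.C (β n) * Qnum S p d n with hP
  have hle : ∀ n ∈ s, n ≤ d := fun n hn => Finset.le_sup (f := id) hn
  have hPd : Polynomial.C N ∣ P := by
    apply dvd_of_dvd_tau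
    have : Polynomial.aeval (-((PowerSeries.X : PowerSeries S) * PowerSeries.mk 1)) P =
      - ((-((PowerSeries.X : PowerSeries S) * PowerSeries.mk 1)) ^ p
          - (-((PowerSeries.X : PowerSeries S) * PowerSeries.mk 1) - 1) ^ p) ^ d *
        ∑ n ∈ s, PowerSeries.C (β n) * (Lser S n - PowerSeries.C ((p : S) ^ (n - 1)) *
          PowerSeries.expand p hp (Lser S n)) := by
      rw [hP, map_sum, Finset.mul_sum]
      apply Finset.sum_congr rfl
      intro n hn
      rw [map_mul, Polynomial.aeval_C]
      by_cases h0 : n = 0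
      · subst h0; simp [hβ]
      · rw [Qnum_tau p hp d n h0 (hle n hn)]
        rw [show algebraMap S (PowerSeries S) (β n) = PowerSeries.C (β n) from rfl]
        ring
    rw [this]
    apply Dvd.dvd.mul_left
    apply dvd_of_coeff
    intro j
    rw [map_sum]
    simp only [PowerSeries.coeff_C_mul, coeff_Lser_sub]
    by_cases hj : p ∣ j
    · simp [hj]
    · simpa [hj] using h j hj
  have hφ := map_dvd (Polynomial.eval₂RingHom ι T) hPd
  simp only [Polynomial.coe_eval₂RingHom, Polynomial.eval₂_C] at hφ
  have key : Polynomial.eval₂ ι T P * i ^ d =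
      ∑ n ∈ s, ι (β n) * ∑ m ∈ Finset.Icc 1 n, ((aco m n : ℤ) : R) *
      (T ^ m - (p : R) ^ (n - 1) * T ^ (p * m) * i ^ m) := by
    rw [hP, ← Polynomial.coe_eval₂RingHom, map_sum, Finset.sum_mul]
    apply Finset.sum_congr rfl
    intro n hn
    rw [map_mul, Polynomial.coe_eval₂RingHom, Polynomial.eval₂_C, mul_assoc]
    congr 1
    rw [Qnum, ← Polynomial.coe_eval₂RingHom, map_sum, Finset.sum_mul]
    apply Finset.sum_congr rfl
    intro m hm
    rw [Finset.mem_Icc] at hm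
    have hT : Polynomial.eval₂RingHom ι T Polynomial.X = T := by simp
    simp only [map_mul, map_sub, map_pow, map_intCast, map_natCast, map_one, hT, ← hD]
    have h1 : D ^ d * i ^ d = 1 := by rw [← mul_pow, hi, one_pow]
    have h2 : D ^ (d - m) * i ^ d = i ^ m := by
      have : i ^ d = i ^ (d - m) * i ^ m := by
        rw [← pow_add]; congr 1; have := hle n hn; omega
      rw [this, ← mul_assoc, ← mul_pow, hi, one_pow, one_mul]
    linear_combination (aco m n : R) * (T ^ m * h1 - (p : R) ^ (n - 1) * T ^ (p * m) * h2)
  rw [← key]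
  exact Dvd.dvd.mul_right hφ _

theorem unit_one_sub (p : ℕ) [Fact p.Prime] (z : LaurentSeries ℤ_[p]) :
    IsUnit (1 - (p : ToddRing p) * algebraMap (LaurentSeries ℤ_[p]) (ToddRing p) z) := by
  have hfg : (Ideal.span {(p : LaurentSeries ℤ_[p])}).FG := Submodule.fg_span (Set.finite_singleton _)
  have h1 : IsAdicComplete (Ideal.span {(p : LaurentSeries ℤ_[p])}) (ToddRing p) :=
    AdicCompletion.isAdicComplete hfg
  have h2 : IsAdicComplete ((Ideal.span {(p : LaurentSeries ℤ_[p])}).map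
      (algebraMap (LaurentSeries ℤ_[p]) (ToddRing p))) (ToddRing p) := by
    exact (IsAdicComplete.map_algebraMap_iff _ _).mpr h1
  have h3 : (p : ToddRing p) ∈ (Ideal.span {(p : LaurentSeries ℤ_[p])}).map
      (algebraMap (LaurentSeries ℤ_[p]) (ToddRing p)) := by
    have := Ideal.mem_map_of_mem (algebraMap (LaurentSeries ℤ_[p]) (ToddRing p))
      (Ideal.mem_span_singleton_self (p : LaurentSeries ℤ_[p]))
    rwa [map_natCast] at this
  have h4 := IsAdicComplete.le_jacobson_bot _ h3
  rw [Ideal.mem_jacobson_bot] at h4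
  have := h4 (-algebraMap (LaurentSeries ℤ_[p]) (ToddRing p) z)
  convert this using 1
  ring

theorem sum_dvd_padic (p : ℕ) [Fact p.Prime] (c : ℤ_[p]ˣ) (f : Polynomial ℚ)
    (hf : ∀ x : ℤ_[p]ˣ, ‖Polynomial.aeval ((x : ℤ_[p]) : ℚ_[p]) f‖ ≤ 1)
    (N : ℤ) (b : ℕ → ℤ) (hb : ∀ n ∈ f.support, (b n : ℚ) = N * f.coeff n) (j : ℕ)
    (hj : ¬ p ∣ j) :
    (N : ℤ_[p]) ∣ ∑ n ∈ f.support, ((b n : ℤ_[p]) * (1 - (c : ℤ_[p]) ^ n)) * (j : ℤ_[p]) ^ (n - 1) := by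
  have hu : IsUnit (j : ℤ_[p]) := by
    rw [PadicInt.isUnit_iff]
    by_contra hne
    have hlt := lt_of_le_of_ne (PadicInt.norm_le_one (j : ℤ_[p])) hne
    have := (PadicInt.norm_int_lt_one_iff_dvd (p := p) (j : ℤ)).mp (by simpa using hlt)
    exact hj (by exact_mod_cast this)
  obtain ⟨x, hx⟩ := hu
  have h1 : ∀ y : ℤ_[p]ˣ, ∃ q : ℤ_[p],
      ∑ n ∈ f.support, (b n : ℤ_[p]) * (y : ℤ_[p]) ^ n = N * q := by
    intro y
    obtain ⟨q, hq⟩ : ∃ q : ℤ_[p], (q : ℚ_[p]) = Polynomial.aeval ((y : ℤ_[p]) : ℚ_[p]) f :=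
      ⟨⟨_, hf y⟩, rfl⟩
    refine ⟨q, ?_⟩
    apply PadicInt.ext
    push_cast
    rw [hq, Polynomial.aeval_eq_sum_range' (n := f.natDegree + 1) (Nat.lt_succ_self _)]
    rw [← Polynomial.sum_over_range' (p := f) (f := fun n a => a • ((y : ℤ_[p]) : ℚ_[p]) ^ n)
      (h := by simp) (n := f.natDegree + 1) (Nat.lt_succ_self _)]
    rw [Polynomial.sum_def]
    rw [Finset.mul_sum, PadicInt.coe_sum]
    apply Finset.sum_congr rfl
    intro n hn
    push_cast
    have := congrArg (Rat.cast : ℚ → ℚ_[p]) (hb n hn)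
    push_cast at this
    rw [this, Rat.smul_def, mul_assoc]
  obtain ⟨q1, h1'⟩ := h1 x
  obtain ⟨q2, h2'⟩ := h1 (c * x)
  have hx' : (x : ℤ_[p]) * ∑ n ∈ f.support,
      ((b n : ℤ_[p]) * (1 - (c : ℤ_[p]) ^ n)) * (j : ℤ_[p]) ^ (n - 1) = N * (q1 - q2) := by
    rw [mul_sub, ← h1', ← h2', ← Finset.sum_sub_distrib, Finset.mul_sum]
    apply Finset.sum_congr rfl
    intro n _
    rcases n with _ | n
    · simp
    · rw [← hx, Nat.add_sub_cancel]; push_cast; ring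
  exact (Units.dvd_mul_left (u := x)).mp (hx' ▸ Dvd.intro _ rfl)

/-- the Todd♯ moment sequence.  Here `Z = ζ` is the integral Laurent
polynomial with `p·ζ = (t⁻¹ − 1)^p − t^{−p} + 1`, and for `n ≥ 1`
`M_n = (1 − cⁿ)·∑_{m=1}^n ((−1)^{m−1}·Δ^m[rⁿ](0)/m)·(t^{−m} − p^{n−1}·t^{−pm}·(1 − pζ)^{−m})`.
There is an `M_0 ∈ R` making `(M_n)` an `R`-valued `p`-adic moment sequence. -/
theorem toddSharp_momentSeq (p : ℕ) [Fact p.Prime] (c : ℤ_[p]ˣ)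
    (hc1 : (c : ℤ_[p]) ≠ 1) (hc2 : (c : ℤ_[p]) ≠ -1)
    (Z : LaurentSeries ℤ_[p])
    (hZ : (p : LaurentSeries ℤ_[p]) * Z =
      (HahnSeries.single (-1 : ℤ) (1 : ℤ_[p]) - 1) ^ p -
        HahnSeries.single (-1 : ℤ) (1 : ℤ_[p]) ^ p + 1) :
    ∃ M0 : ToddRing p,
      IsPadicMomentSeq p (fun n =>
        if n = 0 then M0
        else
          algebraMap (LaurentSeries ℤ_[p]) (ToddRing p)
              (algebraMap ℤ_[p] (LaurentSeries ℤ_[p]) (1 - (c : ℤ_[p]) ^ n)) *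
            ∑ m ∈ Finset.Icc 1 n,
              (((-1) ^ (m - 1) * finiteDiff m n / (m : ℤ) : ℤ) : ToddRing p) *
                (tinv p ^ m -
                  (p : ToddRing p) ^ (n - 1) * tinv p ^ (p * m) *
                    Ring.inverse (1 - (p : ToddRing p) *
                      algebraMap (LaurentSeries ℤ_[p]) (ToddRing p) Z) ^ m)) := by
  refine ⟨0, ?_⟩
  intro f hf
  obtain ⟨N, hN⟩ := IsLocalization.exist_integer_multiples (nonZeroDivisors ℤ) f.support f.coeff
  have hN0 : ((N : ℤ) : ℚ) ≠ 0 := by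
    exact_mod_cast nonZeroDivisors.ne_zero N.2
  have hb' : ∀ n, ∃ b : ℤ, n ∈ f.support → (b : ℚ) = (N : ℤ) * f.coeff n := by
    intro n
    by_cases hn : n ∈ f.support
    · obtain ⟨b, hb⟩ := hN n hn
      refine ⟨b, fun _ => ?_⟩
      simpa using hb
    · exact ⟨0, fun h => absurd h hn⟩
  choose b hb using hb'
  have hunit := unit_one_sub p Z
  have hD : (1 - (p : ToddRing p) * algebraMap (LaurentSeries ℤ_[p]) (ToddRing p) Z) =
      tinv p ^ p - (tinv p - 1) ^ p := by
    have := congrArg (algebraMap (LaurentSeries ℤ_[p]) (ToddRing p)) hZ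
    simp only [map_mul, map_natCast, map_add, map_sub, map_pow, map_one] at this
    rw [this, tinv]
    ring
  have hcore := core_dvd p (Fact.out (p := p.Prime)).ne_zero
    ((algebraMap (LaurentSeries ℤ_[p]) (ToddRing p)).comp (algebraMap ℤ_[p] (LaurentSeries ℤ_[p])))
    (tinv p) _ _ hD (Ring.mul_inverse_cancel _ hunit) f.support
    (fun n => (b n : ℤ_[p]) * (1 - (c : ℤ_[p]) ^ n)) (by simp) ((N : ℤ) : ℤ_[p])
    (fun j hj => sum_dvd_padic p c f hf N b hb j hj)
  obtain ⟨y, hy⟩ := hcore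
  refine ⟨y, ?_⟩
  have e1 : y ⊗ₜ[ℤ] (1 : ℚ) = (((N : ℤ) : ToddRing p) * y) ⊗ₜ[ℤ] (((N : ℤ) : ℚ)⁻¹) := by
    rw [← zsmul_eq_mul, TensorProduct.smul_tmul, zsmul_eq_mul, mul_inv_cancel₀ hN0]
  rw [map_intCast] at hy
  rw [e1, ← hy, TensorProduct.sum_tmul]
  apply Finset.sum_congr rfl
  intro n hn
  have e2 : f.coeff n = (b n) • (((N : ℤ) : ℚ)⁻¹) := by
    rw [zsmul_eq_mul, hb n hn, mul_comm, ← mul_assoc, inv_mul_cancel₀ hN0, one_mul]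
  rw [e2, ← TensorProduct.smul_tmul]
  congr 1
  by_cases h0 : n = 0
  · subst h0; simp
  · simp only [if_neg h0]
    rw [zsmul_eq_mul, RingHom.comp_apply, map_mul, map_mul, map_intCast, map_intCast,
      mul_assoc]
    rfl

end
end

section
/- Let p be a prime and let c ∈ ℤ_p^× with c ≠ 1 and c ≠ −1. Let S := ℤ⟦q⟧((t))^∧_p be the p-adic completion of the ring of Laurent series in t over ℤ⟦q⟧, let P be the q-expansion of (2πi)^{−2} times the Weierstrass ℘-function evaluated at z = log(1−t)/(−2πi), namely P := 1/12 + (1−t)·t^{−2} + ∑_{j≥1} ∑_{d≥1} d·q^{jd}·((1−t)^d + (1−t)^{−d} − 2) ∈ S ⊗ ℚ, let D := (1−t)·d/dt (the derivation of S ⊗ ℚ corresponding to (2πi)^{−1}·d/dz), and let φ be the continuous ring endomorphism of S determined by φ(q) = q^p and φ(t) = 1 − (1−t)^p (corresponding to q ↦ q^p and z ↦ p·z). Then there exist M_0, M_1, M_2 ∈ S such that the sequence (M_n)_{n≥0} whose n-th term for every n ≥ 3 is M_n := (1 − c^n)·( (D^{n−2}P) − p^{n−1}·φ(D^{n−2}P)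 ) ∈ S is an S-valued p-adic moment sequence: for every polynomial f(r) = ∑_{n=0}^N a_n r^n with rational coefficients satisfying f(x) ∈ ℤ_p for every x ∈ ℤ_p^×, the element ∑_{n=0}^N a_n·M_n of S ⊗ ℚ lies in the image of S. -/
open scoped TensorProduct

set_option synthInstance.maxHeartbeats 1000000
set_option maxHeartbeats 1000000

noncomputable section

/-- `ℤ⟦q⟧((t))`: Laurent series in `t` over the power series ring `ℤ⟦q⟧` (realized with
`ℤ_p`-coefficients, via the canonical identification of `p`-adic completions). -/
abbrev LaurentT (p : ℕ) [Fact p.Prime] : Type :=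
  HahnSeries ℤ (PowerSeries ℤ_[p])

/-- `S = ℤ⟦q⟧((t))^∧_p`, the `p`-adic completion of `ℤ⟦q⟧((t))`. -/
abbrev WittenRing (p : ℕ) [Fact p.Prime] : Type :=
  AdicCompletion (Ideal.span {(p : LaurentT p)}) (LaurentT p)

/-- The element `q ∈ S`. -/
def qElem (p : ℕ) [Fact p.Prime] : WittenRing p :=
  algebraMap (LaurentT p) (WittenRing p)
    ((HahnSeries.C : PowerSeries ℤ_[p] →+* LaurentT p) PowerSeries.X)

/-- The element `t ∈ S`. -/
def tElem (p : ℕ) [Fact p.Prime] : WittenRing p :=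
  algebraMap (LaurentT p) (WittenRing p)
    (HahnSeries.single (1 : ℤ) (1 : PowerSeries ℤ_[p]))

/-- `P − 1/12 = (1−t)·t⁻² + ∑_{j≥1} ∑_{d≥1} d·q^{jd}·((1−t)^d + (1−t)^{−d} − 2)`,
the non-constant part of the Weierstrass series `P`; it is integral, i.e. lies in
`ℤ⟦q⟧((t))`.  The coefficient of `tᵐ qᴺ` in the double sum is
`∑_{d ∣ N} d·((−1)ᵐ·C(d,m) + C(d−1+m,m) − 2·[m = 0])`. -/
def weierstrassPone (p : ℕ) [Fact p.Prime] : LaurentT p :=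
  HahnSeries.single (-2 : ℤ) (1 : PowerSeries ℤ_[p]) -
    HahnSeries.single (-1 : ℤ) (1 : PowerSeries ℤ_[p]) +
    (HahnSeries.ofPowerSeries ℤ (PowerSeries ℤ_[p]))
      (PowerSeries.mk fun m =>
        PowerSeries.mk fun N =>
          ((∑ d ∈ N.divisors,
              (d : ℤ) * ((-1) ^ m * (d.choose m : ℤ) + ((d - 1 + m).choose m : ℤ) -
                if m = 0 then 2 else 0) : ℤ) : ℤ_[p]))

section helpers

open Polynomial

section abstractCore

variable {S : Type*} [CommRing S]

theorem ws_D_pow_one (D : Derivation ℤ S S) (x : S) (e : ℤ) (h : D x = e * x) (n : ℕ) :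
    D (x ^ n) = ((n : ℤ) * e : ℤ) * x ^ n := by
  rw [Derivation.leibniz_pow, h]
  rcases n with _ | n
  · simp
  · simp only [nsmul_eq_mul, smul_eq_mul, Nat.add_sub_cancel]
    push_cast; ring

theorem ws_D_mem (D : Derivation ℤ S S) (a b x : S) (ha : D a = 0) (hb : D b = 0)
    (hx : x ∈ Ideal.span {a, b}) : D x ∈ Ideal.span {a, b} := by
  rw [Ideal.mem_span_pair] at hx ⊢
  obtain ⟨y, z, rfl⟩ := hx
  refine ⟨D y, D z, ?_⟩
  simp [ha, hb]; ring

theorem ws_iter_eigen (D : Derivation ℤ S S) (I : Ideal S) (hI : ∀ x ∈ I, D x ∈ I)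
    (x : S) (e : ℤ) (h : D x - e * x ∈ I) (n : ℕ) :
    ((D : S →ₗ[ℤ] S) ^ n) x - (e : S) ^ n * x ∈ I := by
  induction n with
  | zero => simp
  | succ n ih =>
    rw [pow_succ', Module.End.mul_apply]
    have h1 := hI _ ih
    have h2 : D ((e : S) ^ n * x) = (e : S) ^ n * D x := by
      rw [← Int.cast_pow, Derivation.leibniz]; simp
    rw [map_sub, h2] at h1
    have h3 := I.mul_mem_left ((e : S) ^ n) h
    have := I.add_mem h1 h3
    convert this using 1
    simp only [Derivation.coeFn_coe]
    ring

theorem ws_sum_mem (I : Ideal S) {ι : Type*} (s : Finset ι) (f g : ι → S)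
    (h : ∀ i ∈ s, f i - g i ∈ I) : ∑ i ∈ s, f i - ∑ i ∈ s, g i ∈ I := by
  rw [← Finset.sum_sub_distrib]; exact I.sum_mem h

/-- the sum over `d < p L` minus the sum over multiples of `p`. -/
theorem ws_split (p L : ℕ) (hp : 0 < p) (f : ℕ → S) :
    ∑ d ∈ Finset.range (p * L), f d - ∑ d ∈ Finset.range L, f (p * d)
      = ∑ d ∈ Finset.range (p * L) with ¬ p ∣ d, f d := by
  rw [sub_eq_iff_eq_add, ← Finset.sum_filter_not_add_sum_filter (Finset.range (p * L)) (fun d => p ∣ d)]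
  congr 1
  symm
  apply Finset.sum_bij (fun d _ => p * d)
  · intro a ha; simp at ha ⊢; exact Nat.mul_lt_mul_of_pos_left ha hp
  · intro a _ b _ h; exact Nat.eq_of_mul_eq_mul_left hp h
  · intro b hb
    simp at hb
    obtain ⟨hb, a, rfl⟩ := hb
    exact ⟨a, by simp; exact Nat.lt_of_mul_lt_mul_left hb, rfl⟩
  · intros; rfl

theorem ws_expand (p : ℕ) (D : Derivation ℤ S S) (q t u v s P : S)
    (hut : u = 1 - t) (huv : u * v = 1) (hts : t * s = 1) (hDq : D q = 0) (hDt : D t = 1 - t)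
    (K k a : ℕ) (hka : k ≤ a) (sa : S) (hsa : (1 - u ^ (p ^ a)) * sa = 1)
    (hP : ∃ r, P = u * s ^ 2 + ∑ j ∈ Finset.Ico 1 K, ∑ d ∈ Finset.range (p ^ a),
        (d : S) * q ^ (j * d) * (u ^ d + v ^ d - 2) + q ^ K * r) (n : ℕ) :
    D^[n + 1] P - ∑ d ∈ Finset.range (p ^ a),
      ((-(d : S)) ^ (n + 2) * (- u ^ d * (sa + ∑ j ∈ Finset.Ico 1 K, q ^ (j * d))) +
        (d : S) ^ (n + 2) * (v ^ d * ∑ j ∈ Finset.Ico 1 K, q ^ (j * d)))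
      ∈ Ideal.span {(p : S) ^ k, q ^ K} := by
  set I : Ideal S := Ideal.span {(p : S) ^ k, q ^ K} with hIdef
  have hDp : D ((p : S) ^ k) = 0 := by rw [← Nat.cast_pow]; simp
  have hDqn : ∀ m : ℕ, D (q ^ m) = 0 := by
    intro m; rw [Derivation.leibniz_pow, hDq]; simp
  have hI : ∀ x ∈ I, D x ∈ I := fun x hx => ws_D_mem D _ _ x hDp (hDqn K) hx
  have hpI : (p : S) ^ k ∈ I := Ideal.subset_span (by simp)
  have hqI : q ^ K ∈ I := Ideal.subset_span (by simp)
  have hDu : D u = ((-1 : ℤ) : S) * u := by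
    rw [hut, map_sub, hDt]; simp
  have hDv : D v = ((1 : ℤ) : S) * v := by
    have h0 : D (u * v) = 0 := by rw [huv]; simp
    rw [Derivation.leibniz, hDu] at h0
    simp only [smul_eq_mul] at h0
    have h1 : u * D v = 1 := by linear_combination h0 + huv
    linear_combination v * h1 - (D v) * huv
  have hDun : ∀ d : ℕ, D (u ^ d) = ((-(d : ℤ) : ℤ) : S) * u ^ d := by
    intro d; rw [ws_D_pow_one D u (-1) hDu]; push_cast; ring
  have hDvn : ∀ d : ℕ, D (v ^ d) = (((d : ℤ) : ℤ) : S) * v ^ d := by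
    intro d; rw [ws_D_pow_one D v 1 hDv]; push_cast; ring
  have hDs : u * s ^ 2 = - D s := by
    have h0 : D (t * s) = 0 := by rw [hts]; simp
    rw [Derivation.leibniz, hDt, ← hut] at h0
    simp only [smul_eq_mul] at h0
    linear_combination s * h0 - (D s) * hts
  have hDsa : D sa ∈ I := by
    have h0 : D ((1 - u ^ (p ^ a)) * sa) = 0 := by rw [hsa]; simp
    rw [Derivation.leibniz, map_sub, hDun] at h0
    simp only [smul_eq_mul, Derivation.map_one_eq_zero] at h0
    have h1 : D sa = (p : S) ^ k * (- (p : S) ^ (a - k) * u ^ (p ^ a) * sa ^ 2) := by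
      have : (p : S) ^ a = (p : S) ^ k * (p : S) ^ (a - k) := by
        rw [← pow_add, Nat.add_sub_cancel' hka]
      push_cast at h0
      rw [this] at h0
      linear_combination sa * h0 - (D sa) * hsa
    rw [h1]; exact I.mul_mem_right _ hpI
  have hs : s = ∑ d ∈ Finset.range (p ^ a), u ^ d * sa := by
    rw [← Finset.sum_mul]
    have h0 := mul_neg_geom_sum u (p ^ a)
    have h1 : t * ∑ d ∈ Finset.range (p ^ a), u ^ d = 1 - u ^ (p ^ a) := by
      rw [← h0, hut]; ring
    linear_combination (-s) * hsa + s * sa * (-h1) +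
      (∑ d ∈ Finset.range (p ^ a), u ^ d) * sa * hts
  obtain ⟨r, hr⟩ := hP
  have hit : ∀ m x, D^[m] x = ((D : S →ₗ[ℤ] S) ^ m) x := by
    intro m x; rw [Module.End.pow_apply]; rfl
  rw [hit, hr, hDs, map_add, map_add, map_neg]
  have e1 : ((D : S →ₗ[ℤ] S) ^ (n + 1)) (D s) - ∑ d ∈ Finset.range (p ^ a),
      (-(d : S)) ^ (n + 2) * (u ^ d * sa) ∈ I := by
    have : ((D : S →ₗ[ℤ] S) ^ (n + 1)) (D s) = ((D : S →ₗ[ℤ] S) ^ (n + 2)) s := by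
      rw [pow_succ _ (n + 1)]; rfl
    rw [this]
    conv in ((D : S →ₗ[ℤ] S) ^ (n + 2)) s => rw [hs, map_sum]
    apply ws_sum_mem
    intro d _
    have := ws_iter_eigen D I hI (u ^ d * sa) (-(d : ℤ)) (by
      rw [Derivation.leibniz, hDun]
      simp only [smul_eq_mul]
      have := I.mul_mem_left (u ^ d) hDsa
      convert this using 1
      ring) (n + 2)
    simpa using this
  have e2 : ((D : S →ₗ[ℤ] S) ^ (n + 1)) (∑ j ∈ Finset.Ico 1 K, ∑ d ∈ Finset.range (p ^ a),
        (d : S) * q ^ (j * d) * (u ^ d + v ^ d - 2)) -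
      ∑ j ∈ Finset.Ico 1 K, ∑ d ∈ Finset.range (p ^ a),
        ((-(-(d : S)) ^ (n + 2)) * (q ^ (j * d) * u ^ d)
          + (d : S) ^ (n + 2) * (q ^ (j * d) * v ^ d)) ∈ I := by
    rw [map_sum]
    apply ws_sum_mem
    intro j _
    rw [map_sum]
    apply ws_sum_mem
    intro d _
    have a1 := ws_iter_eigen D I hI (q ^ (j * d) * u ^ d) (-(d : ℤ)) (by
      rw [Derivation.leibniz, hDun, hDqn]
      simp only [smul_eq_mul]
      convert I.zero_mem using 1
      ring) (n + 1)
    have a2 := ws_iter_eigen D I hI (q ^ (j * d) * v ^ d) (d : ℤ) (by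
      rw [Derivation.leibniz, hDvn, hDqn]
      simp only [smul_eq_mul]
      convert I.zero_mem using 1
      ring) (n + 1)
    have a3 := ws_iter_eigen D I hI (q ^ (j * d)) 0 (by
      rw [hDqn]; simp) (n + 1)
    have : (d : S) * q ^ (j * d) * (u ^ d + v ^ d - 2) = d • (q ^ (j * d) * u ^ d)
        + d • (q ^ (j * d) * v ^ d) - (2 * d) • q ^ (j * d) := by
      simp only [nsmul_eq_mul]; push_cast; ring
    rw [this, map_sub, map_add, map_nsmul, map_nsmul, map_nsmul]
    simp only [nsmul_eq_mul]
    have := I.sub_mem (I.add_mem (I.mul_mem_left (d : S) a1) (I.mul_mem_left (d : S) a2))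
      (I.mul_mem_left ((2 * d : ℕ) : S) a3)
    convert this using 1
    push_cast
    ring
  have e3 : ((D : S →ₗ[ℤ] S) ^ (n + 1)) (q ^ K * r) ∈ I := by
    have : ∀ m : ℕ, ((D : S →ₗ[ℤ] S) ^ m) (q ^ K * r) ∈ I := by
      intro m
      induction m with
      | zero => exact I.mul_mem_right _ hqI
      | succ m ih => rw [pow_succ', Module.End.mul_apply]; exact hI _ ih
    exact this _
  have := I.add_mem (I.add_mem (I.neg_mem e1) e2) e3
  convert this using 1
  have hsum : ∑ d ∈ Finset.range (p ^ a),
      ((-(d : S)) ^ (n + 2) * (- u ^ d * (sa + ∑ j ∈ Finset.Ico 1 K, q ^ (j * d))) +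
        (d : S) ^ (n + 2) * (v ^ d * ∑ j ∈ Finset.Ico 1 K, q ^ (j * d)))
      = - ∑ d ∈ Finset.range (p ^ a), (-(d : S)) ^ (n + 2) * (u ^ d * sa) +
        ∑ j ∈ Finset.Ico 1 K, ∑ d ∈ Finset.range (p ^ a),
        ((-(-(d : S)) ^ (n + 2)) * (q ^ (j * d) * u ^ d)
          + (d : S) ^ (n + 2) * (q ^ (j * d) * v ^ d)) := by
    rw [Finset.sum_comm, ← Finset.sum_neg_distrib, ← Finset.sum_add_distrib]
    refine Finset.sum_congr rfl fun d _ => ?_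
    rw [Finset.sum_add_distrib, ← Finset.mul_sum, ← Finset.mul_sum, ← Finset.sum_mul,
      ← Finset.sum_mul]
    ring
  rw [hsum]
  ring


theorem ws_B (p : ℕ) [Fact p.Prime] (κ : ℤ_[p] →+* S) (c : ℤ_[p]ˣ) (k : ℕ) (H : ℤ[X])
    (hH : ∀ x : ℤ_[p]ˣ, (p : ℤ_[p]) ^ k ∣ aeval (x : ℤ_[p]) H) (e : ℤ) (he : ¬ (p : ℤ) ∣ e) :
    (p : S) ^ k ∣ ∑ n ∈ H.support,
      ((H.coeff n : ℤ) : S) * κ (1 - (c : ℤ_[p]) ^ (n + 3)) * (e : S) ^ (n + 2) := by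
  have hu : IsUnit (e : ℤ_[p]) := by
    rw [PadicInt.isUnit_iff]
    by_contra h
    have h1 := lt_of_le_of_ne (PadicInt.norm_le_one (e : ℤ_[p])) h
    exact he (PadicInt.norm_int_lt_one_iff_dvd e |>.1 h1)
  obtain ⟨w, hw⟩ := hu
  have h1 := hH w
  have h2 := hH (c * w)
  have h3 : (p : ℤ_[p]) ^ k ∣ (e : ℤ_[p]) ^ 2 * aeval (w : ℤ_[p]) H -
      (e : ℤ_[p]) ^ 2 * (c : ℤ_[p]) ^ 3 * aeval ((c * w : ℤ_[p]ˣ) : ℤ_[p]) H :=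
    dvd_sub (h1.mul_left _) (h2.mul_left _)
  have h4 := map_dvd κ h3
  rw [map_pow, map_natCast] at h4
  convert h4 using 1
  rw [aeval_eq_sum_range, aeval_eq_sum_range, ← Polynomial.sum_def H
    (fun n a => ((a : ℤ) : S) * κ (1 - (c : ℤ_[p]) ^ (n + 3)) * (e : S) ^ (n + 2)),
    Polynomial.sum_over_range _ (by simp), Finset.mul_sum, Finset.mul_sum, ← Finset.sum_sub_distrib,
    map_sum]
  refine Finset.sum_congr rfl fun n _ => ?_
  rw [← map_intCast κ, ← map_intCast κ, ← map_pow, ← map_mul, ← map_mul]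
  congr 1
  rw [Units.val_mul, hw]
  simp only [zsmul_eq_mul]
  ring

theorem ws_core (p : ℕ) [Fact p.Prime] (κ : ℤ_[p] →+* S) (c : ℤ_[p]ˣ)
    (D : Derivation ℤ S S) (φ : S →+* S) (q t u v s P : S)
    (hut : u = 1 - t) (huv : u * v = 1) (hts : t * s = 1) (hDq : D q = 0) (hDt : D t = 1 - t)
    (hφq : φ q = q ^ p) (hφt : φ t = 1 - (1 - t) ^ p)
    (hP : ∀ K E, K ≤ E → ∃ r, P = u * s ^ 2 + ∑ j ∈ Finset.Ico 1 K, ∑ d ∈ Finset.range E,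
        (d : S) * q ^ (j * d) * (u ^ d + v ^ d - 2) + q ^ K * r)
    (hsep : ∀ (k : ℕ) (x : S), (∀ K : ℕ, x ∈ Ideal.span {(p : S) ^ k, q ^ K}) → (p : S) ^ k ∣ x)
    (k : ℕ) (H : ℤ[X])
    (hH : ∀ x : ℤ_[p]ˣ, (p : ℤ_[p]) ^ k ∣ aeval (x : ℤ_[p]) H) :
    (p : S) ^ k ∣ ∑ n ∈ H.support, ((H.coeff n : ℤ) : S) *
      (κ (1 - (c : ℤ_[p]) ^ (n + 3)) *
        (D^[n + 1] P - (p : S) ^ (n + 2) * φ (D^[n + 1] P))) := by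
  have hp : p.Prime := Fact.out
  apply hsep
  intro K
  set I : Ideal S := Ideal.span {(p : S) ^ k, q ^ K} with hIdef
  have hpI : (p : S) ^ k ∈ I := Ideal.subset_span (by simp)
  have hqI : q ^ K ∈ I := Ideal.subset_span (by simp)
  have hφI : ∀ x ∈ I, φ x ∈ I := by
    intro x hx
    obtain ⟨y, z, rfl⟩ := Ideal.mem_span_pair.1 hx
    rw [map_add, map_mul, map_mul, map_pow, map_pow, hφq, map_natCast]
    refine I.add_mem (I.mul_mem_left _ hpI) (I.mul_mem_left _ ?_)
    rw [← pow_mul, mul_comm, pow_mul]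
    exact Ideal.pow_mem_of_mem _ hqI _ hp.pos
  have hφu : φ u = u ^ p := by rw [hut, map_sub, hφt]; simp
  have hφv : φ v = v ^ p := by
    have h1 : u ^ p * φ v = 1 := by rw [← hφu, ← map_mul, huv, map_one]
    have h2 : u ^ p * v ^ p = 1 := by rw [← mul_pow, huv, one_pow]
    linear_combination v ^ p * h1 - (φ v) * h2
  have hsa : ∀ a : ℕ, (1 - u ^ (p ^ a)) * φ^[a] s = 1 := by
    intro a
    induction a with
    | zero => simp [hut, hts]
    | succ a ih =>
      have := congrArg φ ih
      rw [map_mul, map_sub, map_pow, hφu, map_one, ← Function.iterate_succ_apply' φ, ← pow_mul,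
        ← pow_succ'] at this
      exact this
  set a := k + K with ha
  have hKa : K ≤ p ^ a := by
    calc K ≤ a := by omega
      _ ≤ p ^ a := (Nat.lt_pow_self hp.one_lt).le
  have hKa' : K ≤ p ^ (a + 1) := hKa.trans (Nat.pow_le_pow_right hp.pos (by omega))
  set α : ℕ → S := fun d => - u ^ d * (φ^[a + 1] s + ∑ j ∈ Finset.Ico 1 K, q ^ (j * d)) with hα
  set β : ℕ → S := fun d => v ^ d * ∑ j ∈ Finset.Ico 1 K, q ^ (j * d) with hβ
  have key : ∀ n : ℕ, (D^[n + 1] P - (p : S) ^ (n + 2) * φ (D^[n + 1] P)) -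
      ∑ d ∈ Finset.range (p * p ^ a) with ¬ p ∣ d,
        ((-(d : S)) ^ (n + 2) * α d + (d : S) ^ (n + 2) * β d) ∈ I := by
    intro n
    have h1 := ws_expand p D q t u v s P hut huv hts hDq hDt K k (a + 1) (by omega)
      (φ^[a + 1] s) (hsa _) (hP _ _ hKa') n
    have h2 := ws_expand p D q t u v s P hut huv hts hDq hDt K k a (by omega)
      (φ^[a] s) (hsa _) (hP _ _ hKa) n
    have h3 := I.mul_mem_left ((p : S) ^ (n + 2)) (hφI _ h2)
    have h4 := I.sub_mem h1 h3
    rw [← ws_split p (p ^ a) hp.pos]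
    convert h4 using 1
    rw [map_sub, map_sum, mul_sub, Finset.mul_sum, pow_succ' p a]
    have : ∑ d ∈ Finset.range (p ^ a), ((-((p * d : ℕ) : S)) ^ (n + 2) * α (p * d) +
        ((p * d : ℕ) : S) ^ (n + 2) * β (p * d)) =
        ∑ d ∈ Finset.range (p ^ a), (p : S) ^ (n + 2) * φ
      ((-(d : S)) ^ (n + 2) * (- u ^ d * (φ^[a] s + ∑ j ∈ Finset.Ico 1 K, q ^ (j * d))) +
        (d : S) ^ (n + 2) * (v ^ d * ∑ j ∈ Finset.Ico 1 K, q ^ (j * d))) := by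
      refine Finset.sum_congr rfl fun d _ => ?_
      have hq : φ (∑ j ∈ Finset.Ico 1 K, q ^ (j * d)) = ∑ j ∈ Finset.Ico 1 K, q ^ (j * (p * d)) := by
        rw [map_sum]
        refine Finset.sum_congr rfl fun j _ => ?_
        rw [map_pow, hφq, ← pow_mul]; congr 1; ring
      simp only [map_add, map_mul, map_pow, map_neg, map_natCast, hφu, hφv, hq, hα, hβ,
        ← Function.iterate_succ_apply' φ, ← pow_mul]
      push_cast
      ring
    rw [this]
    ring
  have h1 : ∑ n ∈ H.support, ((H.coeff n : ℤ) : S) *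
      (κ (1 - (c : ℤ_[p]) ^ (n + 3)) *
        (D^[n + 1] P - (p : S) ^ (n + 2) * φ (D^[n + 1] P))) -
      ∑ n ∈ H.support, ((H.coeff n : ℤ) : S) *
      (κ (1 - (c : ℤ_[p]) ^ (n + 3)) * ∑ d ∈ Finset.range (p * p ^ a) with ¬ p ∣ d,
        ((-(d : S)) ^ (n + 2) * α d + (d : S) ^ (n + 2) * β d)) ∈ I := by
    apply ws_sum_mem
    intro n _
    rw [← mul_sub, ← mul_sub]
    exact I.mul_mem_left _ (I.mul_mem_left _ (key n))
  have h2 : ∑ n ∈ H.support, ((H.coeff n : ℤ) : S) *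
      (κ (1 - (c : ℤ_[p]) ^ (n + 3)) * ∑ d ∈ Finset.range (p * p ^ a) with ¬ p ∣ d,
        ((-(d : S)) ^ (n + 2) * α d + (d : S) ^ (n + 2) * β d)) ∈ I := by
    have : ∑ n ∈ H.support, ((H.coeff n : ℤ) : S) *
      (κ (1 - (c : ℤ_[p]) ^ (n + 3)) * ∑ d ∈ Finset.range (p * p ^ a) with ¬ p ∣ d,
        ((-(d : S)) ^ (n + 2) * α d + (d : S) ^ (n + 2) * β d)) =
      ∑ d ∈ Finset.range (p * p ^ a) with ¬ p ∣ d,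
        ((∑ n ∈ H.support, ((H.coeff n : ℤ) : S) * κ (1 - (c : ℤ_[p]) ^ (n + 3)) *
          ((-(d : ℤ) : ℤ) : S) ^ (n + 2)) * α d +
        (∑ n ∈ H.support, ((H.coeff n : ℤ) : S) * κ (1 - (c : ℤ_[p]) ^ (n + 3)) *
          (((d : ℤ) : ℤ) : S) ^ (n + 2)) * β d) := by
      simp only [Finset.mul_sum, Finset.sum_mul, ← Finset.sum_add_distrib]
      rw [Finset.sum_comm]
      refine Finset.sum_congr rfl fun d _ => Finset.sum_congr rfl fun n _ => ?_
      push_cast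
      ring
    rw [this]
    refine I.sum_mem fun d hd => ?_
    have hd' : ¬ (p : ℤ) ∣ (d : ℤ) := by
      rw [Int.natCast_dvd_natCast]; exact (Finset.mem_filter.1 hd).2
    have b1 := ws_B p κ c k H hH (-(d : ℤ)) (by rwa [dvd_neg])
    have b2 := ws_B p κ c k H hH (d : ℤ) hd'
    exact I.add_mem (I.mul_mem_right _ (I.mem_of_dvd b1 hpI))
      (I.mul_mem_right _ (I.mem_of_dvd b2 hpI))
  have := I.add_mem h1 h2
  simpa using this

/-- Passing from moments `n ≥ 3` to all moments by `p`-adic continuity. -/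
theorem ws_extend (p : ℕ) [Fact p.Prime]
    (hcomp : ∀ x : ℕ → S, (∀ i, (p : S) ^ i ∣ x (i + 1) - x i) → ∃ y, ∀ i, (p : S) ^ i ∣ y - x i)
    (M : ℕ → S)
    (hM : ∀ (k : ℕ) (H : ℤ[X]), (∀ x : ℤ_[p]ˣ, (p : ℤ_[p]) ^ k ∣ aeval (x : ℤ_[p]) H) →
      (p : S) ^ k ∣ ∑ n ∈ H.support, ((H.coeff n : ℤ) : S) * M (n + 3)) :
    ∃ M0 M1 M2 : S, ∀ (k : ℕ) (F : ℤ[X]),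
      (∀ x : ℤ_[p]ˣ, (p : ℤ_[p]) ^ k ∣ aeval (x : ℤ_[p]) F) →
      (p : S) ^ k ∣ ∑ n ∈ F.support, ((F.coeff n : ℤ) : S) *
        (if n = 0 then M0 else if n = 1 then M1 else if n = 2 then M2 else M n) := by
  have hp : p.Prime := Fact.out
  let T : ℤ[X] → S := fun H => H.sum fun n a => (a : S) * M (n + 3)
  have hTadd : ∀ A B, T (A + B) = T A + T B := fun A B =>
    Polynomial.sum_add_index A B _ (by simp) (by intros; push_cast; ring)
  have hTmon : ∀ n a, T (monomial n a) = (a : S) * M (n + 3) := fun n a =>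
    Polynomial.sum_monomial_index _ _ (by simp)
  let e : ℕ → ℕ := fun i => 3 * ((p - 1) * p ^ i)
  have he3 : ∀ i, 3 ≤ e i := by
    intro i
    have : 0 < (p - 1) * p ^ i := Nat.mul_pos (by have := hp.two_le; omega) (pow_pos hp.pos _)
    simp only [e]; omega
  have hpow : ∀ (i : ℕ) (x : ℤ_[p]ˣ), (p : ℤ_[p]) ^ i ∣ (x : ℤ_[p]) ^ (e i) - 1 := by
    intro i x
    have h0 : (p : ℤ_[p]) ^ (i + 1) ∣ ((x : ℤ_[p]) ^ (p - 1)) ^ (p ^ i) - 1 ^ (p ^ i) := by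
      apply dvd_sub_pow_of_dvd_sub
      rw [← Ideal.mem_span_singleton, ← PadicInt.maximalIdeal_eq_span_p,
        ← PadicInt.ker_toZMod, RingHom.mem_ker, map_sub, map_pow, map_one]
      have : (PadicInt.toZMod (x : ℤ_[p])) ≠ 0 := (x.isUnit.map PadicInt.toZMod).ne_zero
      rw [ZMod.pow_card_sub_one_eq_one this, sub_self]
    rw [one_pow, ← pow_mul] at h0
    have h1 : (x : ℤ_[p]) ^ ((p - 1) * p ^ i) - 1 ∣ (x : ℤ_[p]) ^ (e i) - 1 := by
      have := sub_dvd_pow_sub_pow ((x : ℤ_[p]) ^ ((p - 1) * p ^ i)) 1 3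
      rw [one_pow, ← pow_mul, mul_comm _ 3] at this
      exact this
    exact (pow_dvd_pow _ (Nat.le_succ i)).trans (h0.trans h1)
  have hcau : ∀ j : ℕ, ∃ y, ∀ i, (p : S) ^ i ∣ y - M (j + e i) := by
    intro j
    apply hcomp
    intro i
    have := hM i (monomial (j + e (i + 1) - 3) 1 + monomial (j + e i - 3) (-1)) (by
      intro x
      simp only [map_add, aeval_monomial]
      have hx3 : IsUnit ((x : ℤ_[p]) ^ 3) := x.isUnit.pow 3
      rw [← hx3.dvd_mul_left]
      have h1 := hpow i x
      have h2 := (pow_dvd_pow (p : ℤ_[p]) (Nat.le_succ i)).trans (hpow (i + 1) x)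
      have h3 := (dvd_sub h2 h1).mul_left ((x : ℤ_[p]) ^ j)
      convert h3 using 1
      have e1 : (x : ℤ_[p]) ^ 3 * (x : ℤ_[p]) ^ (j + e (i + 1) - 3) = x ^ j * x ^ (e (i + 1)) := by
        rw [← pow_add, ← pow_add]; congr 1; have := he3 (i + 1); omega
      have e2 : (x : ℤ_[p]) ^ 3 * (x : ℤ_[p]) ^ (j + e i - 3) = x ^ j * x ^ (e i) := by
        rw [← pow_add, ← pow_add]; congr 1; have := he3 i; omega
      simp only [map_one, map_neg, one_mul, neg_mul, mul_add, mul_neg, e1, e2]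
      ring)
    change (p : S) ^ i ∣ T _ at this
    rw [hTadd, hTmon, hTmon] at this
    rw [Nat.sub_add_cancel (by have := he3 (i + 1); omega),
      Nat.sub_add_cancel (by have := he3 i; omega)] at this
    convert this using 1
    push_cast; ring
  choose y hy using hcau
  refine ⟨y 0, y 1, y 2, fun k F hF => ?_⟩
  set M' : ℕ → S := fun n => if n = 0 then y 0 else if n = 1 then y 1 else if n = 2 then y 2 else M n
    with hM'
  let T' : ℤ[X] → S := fun H => H.sum fun n a => (a : S) * M' n
  have hTadd' : ∀ A B, T' (A + B) = T' A + T' B := fun A B =>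
    Polynomial.sum_add_index A B _ (by simp) (by intros; push_cast; ring)
  have hTmon' : ∀ n a, T' (monomial n a) = (a : S) * M' n := fun n a =>
    Polynomial.sum_monomial_index _ _ (by simp)
  change (p : S) ^ k ∣ T' F
  set G := F.divX.divX.divX with hG
  have hFdec : F = X ^ 3 * G + (monomial 2 (F.coeff 2) + (monomial 1 (F.coeff 1) +
      monomial 0 (F.coeff 0))) := by
    ext n
    rcases n with _ | _ | _ | n
    · simp only [coeff_add, coeff_X_pow_mul', coeff_monomial]; simp
    · simp only [coeff_add, coeff_X_pow_mul', coeff_monomial]; simp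
    · simp only [coeff_add, coeff_X_pow_mul', coeff_monomial]; simp
    · simp only [coeff_add, coeff_X_pow_mul', coeff_monomial, hG, coeff_divX]
      simp
  have hT'X : ∀ A : ℤ[X], T' (X ^ 3 * A) = T A := by
    intro A
    induction A using Polynomial.induction_on' with
    | add A B hA hB => rw [mul_add, hTadd', hTadd, hA, hB]
    | monomial n a =>
      rw [hTmon, X_pow_mul_monomial, hTmon']
      simp [hM']
  set H : ℤ[X] := G + (monomial (2 + e k - 3) (F.coeff 2) + (monomial (1 + e k - 3) (F.coeff 1) +
      monomial (0 + e k - 3) (F.coeff 0))) with hHdef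
  have hHint : ∀ x : ℤ_[p]ˣ, (p : ℤ_[p]) ^ k ∣ aeval (x : ℤ_[p]) H := by
    intro x
    have hx3 : IsUnit ((x : ℤ_[p]) ^ 3) := x.isUnit.pow 3
    rw [← hx3.dvd_mul_left]
    have h1 := hpow k x
    have h2 := hF x
    rw [hFdec] at h2
    have h3 := dvd_add h2 (h1.mul_left (F.coeff 0 + F.coeff 1 * (x : ℤ_[p]) +
      F.coeff 2 * (x : ℤ_[p]) ^ 2))
    convert h3 using 1
    have e1 : ∀ j, (x : ℤ_[p]) ^ 3 * (x : ℤ_[p]) ^ (j + e k - 3) = x ^ j * x ^ (e k) := by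
      intro j
      rw [← pow_add, ← pow_add]; congr 1; have := he3 k; omega
    have e10 := e1 0
    have e11 := e1 1
    have e12 := e1 2
    simp only [hHdef, map_add, map_mul, map_pow, aeval_X, aeval_monomial, algebraMap_int_eq,
      eq_intCast]
    linear_combination (F.coeff 0 : ℤ_[p]) * e10 + (F.coeff 1 : ℤ_[p]) * e11 +
      (F.coeff 2 : ℤ_[p]) * e12
  have h1 : (p : S) ^ k ∣ T H := hM k H hHint
  have hr : ∀ j, j + e k - 3 + 3 = j + e k := fun j => Nat.sub_add_cancel (by have := he3 k; omega)
  simp only [hHdef, hTadd, hTmon, hr] at h1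
  rw [hFdec]
  simp only [hTadd', hTmon', hT'X]
  have h2 := dvd_add h1 (dvd_add ((hy 0 k).mul_left (F.coeff 0 : S))
    (dvd_add ((hy 1 k).mul_left (F.coeff 1 : S)) ((hy 2 k).mul_left (F.coeff 2 : S))))
  convert h2 using 1
  simp only [hM']
  norm_num
  ring

open scoped TensorProduct in
theorem ws_moment (p : ℕ) [Fact p.Prime] (κ : ℤ_[p] →+* S) (M : ℕ → S)
    (h : ∀ (k : ℕ) (F : ℤ[X]),
      (∀ x : ℤ_[p]ˣ, (p : ℤ_[p]) ^ k ∣ aeval (x : ℤ_[p]) F) →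
      (p : S) ^ k ∣ ∑ n ∈ F.support, ((F.coeff n : ℤ) : S) * M n)
    (f : Polynomial ℚ)
    (hf : ∀ x : ℤ_[p]ˣ, ‖Polynomial.aeval ((x : ℤ_[p]) : ℚ_[p]) f‖ ≤ 1) :
    ∃ y : S, (∑ n ∈ f.support, (M n) ⊗ₜ[ℤ] (f.coeff n)) = y ⊗ₜ[ℤ] (1 : ℚ) := by
  have hp : p.Prime := Fact.out
  obtain ⟨b, hb0, F, hF⟩ : ∃ b : ℕ, b ≠ 0 ∧ ∃ F : ℤ[X], F.map (Int.castRingHom ℚ) = (b : ℚ) • f := by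
    obtain ⟨b, hbm, hb⟩ := IsLocalization.integerNormalization_spec (nonZeroDivisors ℤ) f
    refine ⟨(b : ℤ).natAbs, by simpa using hbm,
      Polynomial.C ((b : ℤ).sign) * IsLocalization.integerNormalization (nonZeroDivisors ℤ) f, ?_⟩
    have hb' : (IsLocalization.integerNormalization (nonZeroDivisors ℤ) f).map (Int.castRingHom ℚ)
      = ((b : ℤ) : ℚ) • f := by
      rw [← algebraMap_int_eq, hb, Int.cast_smul_eq_zsmul]
    rw [Polynomial.map_mul, hb', Polynomial.map_C, ← smul_eq_C_mul, smul_smul]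
    congr 1
    simp only [eq_intCast, ← Int.cast_mul, Int.sign_mul_self_eq_abs, Int.abs_eq_natAbs, Int.cast_natCast]
  have hcoef : ∀ n, ((F.coeff n : ℤ) : ℚ) = b * f.coeff n := by
    intro n
    have := congrArg (fun g => coeff g n) hF
    simpa using this
  have hbQ : (b : ℚ) ≠ 0 := by exact_mod_cast hb0
  have hsupp : F.support = f.support := by
    ext n
    simp only [mem_support_iff]
    rw [← not_iff_not, not_not, not_not]
    have := hcoef n
    constructor
    · intro h0; rw [h0] at this; simpa [hb0] using this.symm
    · intro h0; rw [h0] at this; simpa using this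
  obtain ⟨k, m, hm, hbm⟩ := Nat.exists_eq_pow_mul_and_not_dvd hb0 p hp.ne_one
  have hmu : IsUnit (m : ℤ_[p]) := by
    rw [PadicInt.isUnit_iff]
    by_contra h
    have h1 := lt_of_le_of_ne (PadicInt.norm_le_one (m : ℤ_[p])) h
    have := (PadicInt.norm_int_lt_one_iff_dvd (p := p) (m : ℤ)).1 (by simpa using h1)
    exact hm (by exact_mod_cast this)
  obtain ⟨w, hw⟩ := hmu
  have hFint : ∀ x : ℤ_[p]ˣ, (p : ℤ_[p]) ^ k ∣ aeval (x : ℤ_[p]) F := by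
    intro x
    have h1 : (((aeval (x : ℤ_[p]) F : ℤ_[p])) : ℚ_[p]) = b * aeval ((x : ℤ_[p]) : ℚ_[p]) f := by
      have e1 : (((aeval (x : ℤ_[p]) F : ℤ_[p])) : ℚ_[p]) = aeval ((x : ℤ_[p]) : ℚ_[p]) F := by
        have := aeval_algebraMap_apply ℚ_[p] (x : ℤ_[p]) F
        exact this.symm
      rw [e1, ← aeval_map_algebraMap ℚ, algebraMap_int_eq, hF, map_smul, Algebra.smul_def]
      simp
    obtain ⟨g, hg⟩ : ∃ g : ℤ_[p], (g : ℚ_[p]) = aeval ((x : ℤ_[p]) : ℚ_[p]) f := ⟨⟨_, hf x⟩, rfl⟩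
    have h2 : (aeval (x : ℤ_[p]) F : ℤ_[p]) =
        (b : ℤ_[p]) * g := by
      apply Subtype.ext
      rw [h1]; simp [hg]
    rw [h2, hbm]
    push_cast
    rw [mul_assoc]
    exact dvd_mul_right _ _
  obtain ⟨z, hz⟩ := h k F hFint
  refine ⟨κ (w⁻¹ : ℤ_[p]ˣ) * z, ?_⟩
  have hy : (b : S) * (κ (w⁻¹ : ℤ_[p]ˣ) * z) = ∑ n ∈ F.support, ((F.coeff n : ℤ) : S) * M n := by
    rw [hz, hbm]
    have : (m : S) * κ (w⁻¹ : ℤ_[p]ˣ) = 1 := by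
      rw [← map_natCast κ, ← map_mul, ← hw, Units.mul_inv, map_one]
    push_cast
    linear_combination (p : S) ^ k * z * this
  have h1 : (κ (w⁻¹ : ℤ_[p]ˣ) * z) ⊗ₜ[ℤ] (1 : ℚ) =
      ((b : S) * (κ (w⁻¹ : ℤ_[p]ˣ) * z)) ⊗ₜ[ℤ] ((b : ℚ)⁻¹) := by
    have : (b : S) * (κ (w⁻¹ : ℤ_[p]ˣ) * z) = (b : ℤ) • (κ (w⁻¹ : ℤ_[p]ˣ) * z) := by simp
    rw [this, TensorProduct.smul_tmul]
    congr 1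
    simp [hbQ]
  rw [h1, hy, TensorProduct.sum_tmul, hsupp]
  refine Finset.sum_congr rfl fun n _ => ?_
  rw [← zsmul_eq_mul, TensorProduct.smul_tmul]
  congr 1
  rw [zsmul_eq_mul, hcoef]
  field_simp

end abstractCore

theorem ws_coeff_one_sub_pow (R : Type*) [CommRing R] (d m : ℕ) :
    PowerSeries.coeff m ((1 - PowerSeries.X : PowerSeries R) ^ d) = (-1) ^ m * (d.choose m : R) := by
  have : (1 - PowerSeries.X : PowerSeries R) ^ d =
      (((1 - Polynomial.X : R[X]) ^ d : R[X]) : PowerSeries R) := by simp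
  rw [this, Polynomial.coeff_coe]
  have h2 : (1 - Polynomial.X : R[X]) ^ d = ((1 + Polynomial.X) ^ d : R[X]).comp (Polynomial.C (-1) * Polynomial.X) := by
    simp [sub_eq_add_neg]
  rw [h2, Polynomial.comp_C_mul_X_coeff, Polynomial.coeff_one_add_X_pow, mul_comm]

theorem ws_coeff_inv_pow (R : Type*) [CommRing R] (d m : ℕ) (hd : 0 < d) :
    PowerSeries.coeff m ((PowerSeries.mk 1 : PowerSeries R) ^ d) = ((d - 1 + m).choose m : R) := by
  obtain ⟨d, rfl⟩ : ∃ e, d = e + 1 := ⟨d - 1, by omega⟩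
  rw [PowerSeries.mk_one_pow_eq_mk_choose_add, PowerSeries.coeff_mk, Nat.add_sub_cancel,
    Nat.choose_symm_add]

theorem ws_ps_expand (p : ℕ) [Fact p.Prime] (K E : ℕ) (hKE : K ≤ E) :
    (PowerSeries.C (PowerSeries.X : PowerSeries ℤ_[p])) ^ K ∣
      (PowerSeries.mk fun m =>
        PowerSeries.mk fun N =>
          ((∑ d ∈ N.divisors,
              (d : ℤ) * ((-1) ^ m * (d.choose m : ℤ) + ((d - 1 + m).choose m : ℤ) -
                if m = 0 then 2 else 0) : ℤ) : ℤ_[p])) -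
      ∑ j ∈ Finset.Ico 1 K, ∑ d ∈ Finset.range E,
        (d : PowerSeries (PowerSeries ℤ_[p])) *
          (PowerSeries.C (PowerSeries.X : PowerSeries ℤ_[p])) ^ (j * d) *
          ((1 - PowerSeries.X) ^ d + (PowerSeries.mk 1) ^ d - 2) := by
  set A : PowerSeries (PowerSeries ℤ_[p]) := _ - _ with hA
  have key : ∀ m, (PowerSeries.X : PowerSeries ℤ_[p]) ^ K ∣ PowerSeries.coeff m A := by
    intro m
    rw [PowerSeries.X_pow_dvd_iff]
    intro N hN
    have hterm : ∀ j d : ℕ, PowerSeries.coeff N (PowerSeries.coeff m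
        ((d : PowerSeries (PowerSeries ℤ_[p])) *
          (PowerSeries.C (PowerSeries.X : PowerSeries ℤ_[p])) ^ (j * d) *
          ((1 - PowerSeries.X) ^ d + (PowerSeries.mk 1) ^ d - 2))) =
        if N = j * d then (((d : ℤ) * ((-1) ^ m * (d.choose m : ℤ) + ((d - 1 + m).choose m : ℤ) -
                if m = 0 then 2 else 0) : ℤ) : ℤ_[p]) else 0 := by
      intro j d
      rcases Nat.eq_zero_or_pos d with rfl | hd
      · simp
      have e1 : (d : PowerSeries (PowerSeries ℤ_[p])) *
          (PowerSeries.C (PowerSeries.X : PowerSeries ℤ_[p])) ^ (j * d) *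
          ((1 - PowerSeries.X) ^ d + (PowerSeries.mk 1) ^ d - 2) =
          PowerSeries.C ((d : PowerSeries ℤ_[p]) * PowerSeries.X ^ (j * d)) *
          ((1 - PowerSeries.X) ^ d + (PowerSeries.mk 1) ^ d - PowerSeries.C 2) := by
        rw [map_mul, map_natCast, map_pow, map_ofNat]
      rw [e1, PowerSeries.coeff_C_mul, map_sub, map_add, ws_coeff_one_sub_pow,
        ws_coeff_inv_pow _ _ _ hd, PowerSeries.coeff_C]
      have e2 : (d : PowerSeries ℤ_[p]) * PowerSeries.X ^ (j * d) *
          ((-1) ^ m * (d.choose m : PowerSeries ℤ_[p]) + ((d - 1 + m).choose m : PowerSeries ℤ_[p]) -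
            if m = 0 then 2 else 0) =
          PowerSeries.C (((d : ℤ) * ((-1) ^ m * (d.choose m : ℤ) + ((d - 1 + m).choose m : ℤ) -
                if m = 0 then 2 else 0) : ℤ) : ℤ_[p]) * PowerSeries.X ^ (j * d) := by
        split_ifs
        · simp only [map_intCast]; push_cast; ring
        · simp only [map_intCast]; push_cast; ring
      rw [e2, PowerSeries.coeff_C_mul, PowerSeries.coeff_X_pow]
      simp
    rw [hA, map_sub, map_sub, map_sum, map_sum, PowerSeries.coeff_mk, PowerSeries.coeff_mk]
    simp only [map_sum, hterm]
    rw [sub_eq_zero, Int.cast_sum]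
    rw [Finset.sum_comm]
    rcases Nat.eq_zero_or_pos N with rfl | hN0
    · symm
      simp only [Nat.divisors_zero, Finset.sum_empty]
      refine Finset.sum_eq_zero fun d _ => Finset.sum_eq_zero fun j hj => ?_
      rw [Finset.mem_Ico] at hj
      by_cases h : 0 = j * d
      · have : d = 0 := by
          rcases Nat.mul_eq_zero.1 h.symm with h | h <;> omega
        subst this; simp
      · rw [if_neg h]
    have hinner : ∀ (d : ℕ) (x : ℤ_[p]), ∑ j ∈ Finset.Ico 1 K, (if N = j * d then x else 0) =
        if d ∣ N then x else 0 := by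
      intro d x
      split_ifs with h
      · obtain ⟨j, hj⟩ := h
        have hd : 0 < d := Nat.pos_of_ne_zero (by rintro rfl; simp at hj; omega)
        have hj0 : 0 < j := Nat.pos_of_ne_zero (by rintro rfl; simp at hj; omega)
        rw [Finset.sum_eq_single j]
        · rw [if_pos (by rw [hj, mul_comm])]
        · intro i _ hi
          rw [if_neg]
          intro h
          apply hi
          rw [hj, mul_comm] at h
          exact (Nat.eq_of_mul_eq_mul_right hd h).symm
        · intro h
          exfalso; apply h
          rw [Finset.mem_Ico]
          exact ⟨hj0, lt_of_le_of_lt (by rw [hj]; exact Nat.le_mul_of_pos_left _ hd) hN⟩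
      · refine Finset.sum_eq_zero fun j _ => ?_
        rw [if_neg]
        rintro rfl
        exact h (dvd_mul_left _ _)
    simp only [hinner]
    rw [← Finset.sum_filter]
    refine Finset.sum_congr ?_ fun _ _ => rfl
    ext d
    simp only [Nat.mem_divisors, Finset.mem_filter, Finset.mem_range]
    constructor
    · rintro ⟨h, _⟩; exact ⟨by have := Nat.le_of_dvd hN0 h; omega, h⟩
    · rintro ⟨_, h⟩; exact ⟨h, by omega⟩
  choose b hb using key
  refine ⟨PowerSeries.mk b, ?_⟩
  ext1 m
  rw [← map_pow, PowerSeries.coeff_C_mul, PowerSeries.coeff_mk, hb]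

theorem ws_laurent_sep (p : ℕ) [Fact p.Prime] (k : ℕ) (x : LaurentT p)
    (h : ∀ K : ℕ, x ∈ Ideal.span {(p : LaurentT p) ^ k,
      ((HahnSeries.C : PowerSeries ℤ_[p] →+* LaurentT p) PowerSeries.X) ^ K}) :
    (p : LaurentT p) ^ k ∣ x := by
  have hp : p.Prime := Fact.out
  have hpk : ∀ y : LaurentT p, (p : LaurentT p) ^ k * y =
      HahnSeries.C ((p : PowerSeries ℤ_[p]) ^ k) * y := by
    intro y; rw [map_pow, map_natCast]
  have hne : (PowerSeries.C ((p : ℤ_[p]) ^ k)) ≠ 0 := by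
    rw [Ne, map_eq_zero_iff _ PowerSeries.C_injective]
    exact pow_ne_zero _ (by exact_mod_cast hp.ne_zero)
  have key : ∀ n : ℤ, ∃ y : PowerSeries ℤ_[p], x.coeff n = PowerSeries.C ((p : ℤ_[p]) ^ k) * y := by
    intro n
    have h1 : ∀ N : ℕ, ∃ z : ℤ_[p], PowerSeries.coeff N (x.coeff n) = (p : ℤ_[p]) ^ k * z := by
      intro N
      obtain ⟨a, b, hab⟩ := Ideal.mem_span_pair.1 (h (N + 1))
      rw [mul_comm a, mul_comm b, hpk, ← map_pow] at hab
      have h2 := congrArg (fun z : LaurentT p => PowerSeries.coeff N (z.coeff n)) hab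
      simp only [HahnSeries.coeff_add, HahnSeries.C_mul_eq_smul, HahnSeries.coeff_smul, smul_eq_mul,
        map_add] at h2
      rw [PowerSeries.coeff_X_pow_mul', if_neg (by omega), add_zero] at h2
      refine ⟨PowerSeries.coeff N (a.coeff n), ?_⟩
      rw [← h2]
      have : (p : PowerSeries ℤ_[p]) ^ k = PowerSeries.C ((p : ℤ_[p]) ^ k) := by simp
      rw [this, PowerSeries.coeff_C_mul]
    choose z hz using h1
    refine ⟨PowerSeries.mk z, ?_⟩
    ext N
    rw [hz, PowerSeries.coeff_C_mul, PowerSeries.coeff_mk]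
  choose y hy using key
  have hsupp : Function.support y ⊆ x.support := by
    intro n hn
    rw [HahnSeries.mem_support, hy]
    exact mul_ne_zero hne hn
  refine ⟨⟨y, x.isPWO_support.mono hsupp⟩, ?_⟩
  ext1
  funext n
  rw [hpk, HahnSeries.C_mul_eq_smul, HahnSeries.coeff_smul, hy]
  simp

theorem ws_adic_smul {R : Type*} [CommRing R] (I : Ideal R) (r : R) (y : AdicCompletion I R) :
    r • y = algebraMap R (AdicCompletion I R) r * y := Algebra.smul_def r y

theorem ws_adic_mem {R : Type*} [CommRing R] (a : R) (k : ℕ)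
    (x : AdicCompletion (Ideal.span {a}) R) :
    x ∈ ((Ideal.span {a}) ^ k • ⊤ : Submodule R (AdicCompletion (Ideal.span {a}) R)) ↔
      (algebraMap R (AdicCompletion (Ideal.span {a}) R) a) ^ k ∣ x := by
  rw [Ideal.span_singleton_pow]
  constructor
  · intro h1
    rw [Submodule.ideal_span_singleton_smul] at h1
    obtain ⟨y, -, hy⟩ := h1
    refine ⟨y, ?_⟩
    rw [← hy, ← map_pow, ← ws_adic_smul]
    rfl
  · rintro ⟨y, rfl⟩
    rw [← map_pow, ← ws_adic_smul]
    exact Submodule.smul_mem_smul (Ideal.mem_span_singleton_self _) trivial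

theorem ws_adic_ker {R : Type*} [CommRing R] (a : R) (k : ℕ)
    (x : AdicCompletion (Ideal.span {a}) R)
    (h : AdicCompletion.eval (Ideal.span {a}) R k x = 0) :
    (algebraMap R (AdicCompletion (Ideal.span {a}) R) a) ^ k ∣ x := by
  rw [← ws_adic_mem, AdicCompletion.pow_smul_top_eq_ker_eval (Submodule.fg_span_singleton _)]
  exact h

theorem ws_adic_complete {R : Type*} [CommRing R] (a : R)
    (x : ℕ → AdicCompletion (Ideal.span {a}) R)
    (hx : ∀ i, (algebraMap R (AdicCompletion (Ideal.span {a}) R) a) ^ i ∣ x (i + 1) - x i) :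
    ∃ y, ∀ i, (algebraMap R (AdicCompletion (Ideal.span {a}) R) a) ^ i ∣ y - x i := by
  have hac : IsAdicComplete (Ideal.span {a}) (AdicCompletion (Ideal.span {a}) R) :=
    AdicCompletion.isAdicComplete (Submodule.fg_span_singleton _)
  have hle : ∀ m n, m ≤ n →
      (algebraMap R (AdicCompletion (Ideal.span {a}) R) a) ^ m ∣ x n - x m := by
    intro m n hmn
    induction n, hmn using Nat.le_induction with
    | base => simp
    | succ n hn ih =>
      have := dvd_add ((pow_dvd_pow _ hn).trans (hx n)) ih
      simpa using this
  obtain ⟨L, hL⟩ := hac.toIsPrecomplete.prec (f := x) (by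
    intro m n hmn
    refine SModEq.symm ?_
    rw [SModEq.sub_mem, ws_adic_mem]
    exact hle m n hmn)
  refine ⟨L, fun i => ?_⟩
  have := (hL i).symm
  rw [SModEq.sub_mem, ws_adic_mem] at this
  exact this

theorem ws_ker (p : ℕ) [Fact p.Prime] (k : ℕ) (x : WittenRing p)
    (h : AdicCompletion.eval (Ideal.span {(p : LaurentT p)}) (LaurentT p) k x = 0) :
    (p : WittenRing p) ^ k ∣ x := by
  have := ws_adic_ker (p : LaurentT p) k x h
  rwa [map_natCast] at this

theorem ws_complete (p : ℕ) [Fact p.Prime] (x : ℕ → WittenRing p)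
    (hx : ∀ i, (p : WittenRing p) ^ i ∣ x (i + 1) - x i) :
    ∃ y, ∀ i, (p : WittenRing p) ^ i ∣ y - x i := by
  have := ws_adic_complete (p : LaurentT p) x
  rw [map_natCast] at this
  exact this hx

theorem ws_sep (p : ℕ) [Fact p.Prime] (k : ℕ) (x : WittenRing p)
    (h : ∀ K : ℕ, x ∈ Ideal.span {(p : WittenRing p) ^ k, (algebraMap (LaurentT p) (WittenRing p)
      ((HahnSeries.C : PowerSeries ℤ_[p] →+* LaurentT p) PowerSeries.X)) ^ K}) :
    (p : WittenRing p) ^ k ∣ x := by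
  set I := Ideal.span {(p : LaurentT p)}
  apply ws_ker
  obtain ⟨r, hr⟩ := Ideal.Quotient.mk_surjective (AdicCompletion.evalₐ I k x)
  have hIk : I ^ k = Ideal.span {(p : LaurentT p) ^ k} := Ideal.span_singleton_pow _ _
  have hr' : (p : LaurentT p) ^ k ∣ r := by
    apply ws_laurent_sep
    intro K
    obtain ⟨a, b, hab⟩ := Ideal.mem_span_pair.1 (h K)
    obtain ⟨b', hb'⟩ := Ideal.Quotient.mk_surjective (AdicCompletion.evalₐ I k b)
    have h1 := congrArg (AdicCompletion.evalₐ I k) hab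
    rw [map_add, map_mul, map_mul, map_pow, map_pow, map_natCast, AlgHom.commutes, ← hr, ← hb',
      Ideal.Quotient.algebraMap_eq] at h1
    have h2 : ((p : LaurentT p ⧸ I ^ k)) ^ k = 0 := by
      rw [← map_natCast (Ideal.Quotient.mk (I ^ k)), ← map_pow, Ideal.Quotient.eq_zero_iff_mem, hIk]
      exact Ideal.subset_span rfl
    rw [h2, mul_zero, zero_add, ← map_pow, ← map_mul, eq_comm, Ideal.Quotient.eq, hIk,
      Ideal.mem_span_singleton'] at h1
    obtain ⟨a', ha'⟩ := h1
    rw [Ideal.mem_span_pair]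
    exact ⟨a', b', by rw [ha']; ring⟩
  have h0 : AdicCompletion.evalₐ I k x = 0 := by
    rw [← hr, Ideal.Quotient.eq_zero_iff_mem, hIk, Ideal.mem_span_singleton]
    exact hr'
  rw [← AdicCompletion.factor_evalₐ_eq_eval I x (by simp), h0, map_zero]


theorem ws_laurent_expand (p : ℕ) [Fact p.Prime] (K E : ℕ) (hKE : K ≤ E) :
    ∃ r : LaurentT p, weierstrassPone p =
      (1 - HahnSeries.single (1 : ℤ) (1 : PowerSeries ℤ_[p])) *
        (HahnSeries.single (-1 : ℤ) (1 : PowerSeries ℤ_[p])) ^ 2 +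
      ∑ j ∈ Finset.Ico 1 K, ∑ d ∈ Finset.range E,
        (d : LaurentT p) *
          ((HahnSeries.C : PowerSeries ℤ_[p] →+* LaurentT p) PowerSeries.X) ^ (j * d) *
          ((1 - HahnSeries.single (1 : ℤ) (1 : PowerSeries ℤ_[p])) ^ d +
            (HahnSeries.ofPowerSeries ℤ (PowerSeries ℤ_[p]) (PowerSeries.mk 1)) ^ d - 2) +
      ((HahnSeries.C : PowerSeries ℤ_[p] →+* LaurentT p) PowerSeries.X) ^ K * r := by
  obtain ⟨r, hr⟩ := ws_ps_expand p K E hKE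
  refine ⟨HahnSeries.ofPowerSeries ℤ (PowerSeries ℤ_[p]) r, ?_⟩
  have h1 := congrArg (HahnSeries.ofPowerSeries ℤ (PowerSeries ℤ_[p])) hr
  simp only [map_sub, map_sum, map_mul, map_pow, map_natCast, map_add, map_one, map_ofNat,
    HahnSeries.ofPowerSeries_C, HahnSeries.ofPowerSeries_X] at h1
  have h2 : (1 - HahnSeries.single (1 : ℤ) (1 : PowerSeries ℤ_[p])) *
        (HahnSeries.single (-1 : ℤ) (1 : PowerSeries ℤ_[p])) ^ 2 =
      HahnSeries.single (-2 : ℤ) (1 : PowerSeries ℤ_[p]) -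
        HahnSeries.single (-1 : ℤ) (1 : PowerSeries ℤ_[p]) := by
    rw [sub_mul, one_mul, sq, HahnSeries.single_mul_single, HahnSeries.single_mul_single]
    norm_num
  rw [weierstrassPone, h2]
  linear_combination h1

theorem ws_exists_derivation {S : Type*} [CommRing S] (D : S → S)
    (hDadd : ∀ x y, D (x + y) = D x + D y) (hDmul : ∀ x y, D (x * y) = x * D y + y * D x) :
    ∃ Dd : Derivation ℤ S S, (Dd : S → S) = D := by
  let Da : S →+ S :=
    { toFun := D, map_zero' := by simpa using hDadd 0 0, map_add' := hDadd }
  exact ⟨Derivation.mk' Da.toIntLinearMap (fun a b => hDmul a b), rfl⟩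

end helpers

/-- the Witten♯ moment sequence.  `D` is the derivation `(1−t)·d/dt` of
`S ⊗ ℚ` (corresponding to `(2πi)⁻¹·d/dz`), given here on `S` by its defining algebraic
properties (additivity, Leibniz rule, `D q = 0`, `D t = 1 − t`); since derivations kill
constants, `D^{n−2} P = D^{n−2} (P − 1/12)` for `n ≥ 3`, where `P − 1/12 ∈ S` is the
explicit series `weierstrassPone`.  `φ` is the (continuous) ring endomorphism of `S`
determined by `φ(q) = q^p` and `φ(t) = 1 − (1−t)^p`.  For `n ≥ 3`,
`M_n = (1 − cⁿ)·(D^{n−2}P − p^{n−1}·φ(D^{n−2}P)) ∈ S`, and there exist `M_0, M_1, M_2 ∈ S`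
making `(M_n)` an `S`-valued `p`-adic moment sequence. -/
theorem wittenSharp_momentSeq (p : ℕ) [Fact p.Prime] (c : ℤ_[p]ˣ)
    (hc1 : (c : ℤ_[p]) ≠ 1) (hc2 : (c : ℤ_[p]) ≠ -1)
    (D : WittenRing p → WittenRing p)
    (hDadd : ∀ x y, D (x + y) = D x + D y)
    (hDmul : ∀ x y, D (x * y) = x * D y + y * D x)
    (hDq : D (qElem p) = 0)
    (hDt : D (tElem p) = 1 - tElem p)
    (φ : WittenRing p →+* WittenRing p)
    (hφq : φ (qElem p) = qElem p ^ p)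
    (hφt : φ (tElem p) = 1 - (1 - tElem p) ^ p) :
    ∃ M0 M1 M2 : WittenRing p,
      IsPadicMomentSeq p (fun n =>
        if n = 0 then M0 else if n = 1 then M1 else if n = 2 then M2
        else
          algebraMap (LaurentT p) (WittenRing p)
              (algebraMap ℤ_[p] (LaurentT p) (1 - (c : ℤ_[p]) ^ n)) *
            (D^[n - 2] (algebraMap (LaurentT p) (WittenRing p) (weierstrassPone p)) -
              (p : WittenRing p) ^ (n - 1) *
                φ (D^[n - 2]
                  (algebraMap (LaurentT p) (WittenRing p) (weierstrassPone p))))) := by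
  obtain ⟨Dd, rfl⟩ := ws_exists_derivation D hDadd hDmul
  let κ : ℤ_[p] →+* WittenRing p :=
    (algebraMap (LaurentT p) (WittenRing p)).comp (algebraMap ℤ_[p] (LaurentT p))
  let ι : LaurentT p →+* WittenRing p := algebraMap (LaurentT p) (WittenRing p)
  have huv : (1 - tElem p) *
      ι (HahnSeries.ofPowerSeries ℤ (PowerSeries ℤ_[p]) (PowerSeries.mk 1)) = 1 := by
    have h1 : (1 - tElem p) = ι (HahnSeries.ofPowerSeries ℤ (PowerSeries ℤ_[p])
        (1 - PowerSeries.X)) := by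
      rw [map_sub, map_sub, map_one, map_one, HahnSeries.ofPowerSeries_X]; rfl
    rw [h1, ← map_mul, ← map_mul, mul_comm, PowerSeries.mk_one_mul_one_sub_eq_one, map_one, map_one]
  have hts : tElem p * ι (HahnSeries.single (-1 : ℤ) (1 : PowerSeries ℤ_[p])) = 1 := by
    have h1 : tElem p = ι (HahnSeries.single (1 : ℤ) (1 : PowerSeries ℤ_[p])) := rfl
    rw [h1, ← map_mul, HahnSeries.single_mul_single, mul_one, add_neg_cancel,
      HahnSeries.single_zero_one, map_one]
  have hP : ∀ K E, K ≤ E → ∃ r, ι (weierstrassPone p) =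
      (1 - tElem p) * (ι (HahnSeries.single (-1 : ℤ) (1 : PowerSeries ℤ_[p]))) ^ 2 +
      ∑ j ∈ Finset.Ico 1 K, ∑ d ∈ Finset.range E,
        (d : WittenRing p) * (qElem p) ^ (j * d) * ((1 - tElem p) ^ d +
          (ι (HahnSeries.ofPowerSeries ℤ (PowerSeries ℤ_[p]) (PowerSeries.mk 1))) ^ d - 2) +
        (qElem p) ^ K * r := by
    intro K E hKE
    obtain ⟨r, hr⟩ := ws_laurent_expand p K E hKE
    refine ⟨ι r, ?_⟩
    rw [hr]
    simp only [map_sub, map_sum, map_mul, map_pow, map_natCast, map_add, map_one, map_ofNat]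
    rfl
  obtain ⟨M0, M1, M2, hM⟩ := ws_extend p (ws_complete p)
    (fun n => κ (1 - (c : ℤ_[p]) ^ n) *
      (Dd^[n - 2] (ι (weierstrassPone p)) - (p : WittenRing p) ^ (n - 1) *
        φ (Dd^[n - 2] (ι (weierstrassPone p)))))
    (fun k H hH => ws_core p κ c Dd φ (qElem p) (tElem p) (1 - tElem p)
      (ι (HahnSeries.ofPowerSeries ℤ (PowerSeries ℤ_[p]) (PowerSeries.mk 1)))
      (ι (HahnSeries.single (-1 : ℤ) (1 : PowerSeries ℤ_[p])))
      (ι (weierstrassPone p)) rfl huv hts hDq hDt hφq hφt hP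
      (fun k x hx => ws_sep p k x hx) k H hH)
  exact ⟨M0, M1, M2, fun f hf => ws_moment p κ _ hM f hf⟩

end
end
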